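/- arXiv:2002.06630 — 4 statements merged into one kernel-verified Lean document; each statement's English description precedes it below -/
import Mathlib

section
/- Let K_1, ..., K_{d+1} be d+1 finite families of convex sets in R^d such that for every choice of sets K_1 ∈ K_1, ..., K_{d+1} ∈ K_{d+1} the intersection K_1 ∩ ... ∩ K_{d+1} is nonempty. Then there exists an index 1 ≤ i ≤ d+1 such that the intersection of all the sets in the family K_i is nonempty. -/
lemma chelly_unique {d : ℕ} {C : Set (EuclideanSpace ℝ (Fin d))} (hC : Convex ℝ C)
    {p q : EuclideanSpace ℝ (Fin d)} (hp : p ∈ C) (hq : q ∈ C)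
    (hmin : ∀ y ∈ C, ‖p‖ ≤ ‖y‖) (hqp : ‖q‖ ≤ ‖p‖) : q = p := by
  have hm : (1/2 : ℝ) • p + (1/2 : ℝ) • q ∈ C :=
    hC hp hq (by norm_num) (by norm_num) (by norm_num)
  have h1 := hmin _ hm
  rw [← smul_add, norm_smul] at h1
  have h2 : ‖(1/2 : ℝ)‖ = 1/2 := by norm_num
  rw [h2] at h1
  have h3 := parallelogram_law_with_norm ℝ q p
  rw [add_comm q p] at h3
  have hn := norm_nonneg p
  have hn' := norm_nonneg q
  have h4 : ‖q - p‖ = 0 := by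
    have := norm_nonneg (q - p)
    nlinarith
  exact sub_eq_zero.mp (norm_eq_zero.mp h4)

lemma chelly_compact (d : ℕ) (ι : Fin (d + 1) → Type) [∀ j, Finite (ι j)] [∀ j, Nonempty (ι j)]
    (A : ∀ j, ι j → Set (EuclideanSpace ℝ (Fin d)))
    (hconv : ∀ j k, Convex ℝ (A j k)) (hcomp : ∀ j k, IsCompact (A j k))
    (hcol : ∀ f : ∀ j, ι j, (⋂ j, A j (f j)).Nonempty) :
    ∃ i, (⋂ k, A i k).Nonempty := by
  classical
  by_cases hd : d = 0
  · subst hd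
    refine ⟨0, 0, ?_⟩
    rw [Set.mem_iInter]
    intro k
    obtain ⟨x, hx⟩ := hcol (Function.update (fun j => Classical.arbitrary (ι j)) 0 k)
    have := Set.mem_iInter.1 hx 0
    rw [Function.update_self] at this
    rwa [Subsingleton.elim x 0] at this
  have hne : ∀ i : Fin (d + 1), ∃ j : Fin (d + 1), j ≠ i := by
    intro i
    have : Nontrivial (Fin (d + 1)) := Fin.nontrivial_iff_two_le.2 (by omega)
    exact exists_ne i
  let B : Fin (d + 1) × (∀ j, ι j) → Set (EuclideanSpace ℝ (Fin d)) :=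
    fun a => {x | ∀ j, j ≠ a.1 → x ∈ A j (a.2 j)}
  have hBconv : ∀ a, Convex ℝ (B a) := by
    intro a x hx y hy s t hs ht hst j hj
    exact hconv j _ (hx j hj) (hy j hj) hs ht hst
  have hBcl : ∀ a, IsClosed (B a) := by
    intro a
    have : B a = ⋂ j, ⋂ (_ : j ≠ a.1), A j (a.2 j) := by ext; simp [B]
    rw [this]
    exact isClosed_iInter fun j => isClosed_iInter fun _ => (hcomp j _).isClosed
  have hBcomp : ∀ a, IsCompact (B a) := by
    intro a
    obtain ⟨j, hj⟩ := hne a.1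
    exact (hcomp j (a.2 j)).of_isClosed_subset (hBcl a) (fun x hx => hx j hj)
  have hBne : ∀ a, (B a).Nonempty := by
    intro a
    obtain ⟨x, hx⟩ := hcol a.2
    exact ⟨x, fun j _ => Set.mem_iInter.1 hx j⟩
  have hmin : ∀ a, ∃ x ∈ B a, ∀ y ∈ B a, ‖x‖ ≤ ‖y‖ := fun a =>
    (hBcomp a).exists_isMinOn (hBne a) continuous_norm.continuousOn
  choose m hmB hm using hmin
  obtain ⟨⟨i, f⟩, hmax⟩ := Finite.exists_max (fun a => ‖m a‖)
  refine ⟨i, m (i, f), ?_⟩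
  rw [Set.mem_iInter]
  intro k
  set g : ∀ j, ι j := Function.update f i k with hg
  have hgi : g i = k := Function.update_self ..
  have hgj : ∀ j, j ≠ i → g j = f j := fun j hj => Function.update_of_ne hj ..
  have hgcomp : IsCompact (⋂ j, A j (g j)) :=
    (hcomp i (g i)).of_isClosed_subset (isClosed_iInter fun j => (hcomp j _).isClosed)
      (Set.iInter_subset _ i)
  obtain ⟨q, hq, hqmin⟩ :=
    hgcomp.exists_isMinOn (hcol g) (f := fun x => ‖x‖) continuous_norm.continuousOn
  have hq' := Set.mem_iInter.1 hq
  have hqp : ‖q‖ ≤ ‖m (i, f)‖ := by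
    by_contra hlt
    push Not at hlt
    let F : Option (Fin (d + 1)) → Set (EuclideanSpace ℝ (Fin d)) :=
      fun o => o.elim (Metric.ball 0 ‖q‖) (fun j => A j (g j))
    have hel : (⋂ o ∈ (Finset.univ : Finset (Option (Fin (d + 1)))), F o).Nonempty := by
      apply Convex.helly_theorem' (𝕜 := ℝ)
      · rintro (_ | j) _
        · exact convex_ball _ _
        · exact hconv _ _
      · intro I _ hI
        have : ∃ o, o ∉ I := by
          by_contra hall
          push Not at hall
          rw [(Finset.eq_univ_iff_forall).2 hall] at hI
          simp at hI
        obtain ⟨o, ho⟩ := this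
        rcases o with _ | j
        · refine ⟨q, ?_⟩
          simp only [Set.mem_iInter]
          rintro (_ | l) hl
          · exact absurd hl ho
          · exact hq' l
        · refine ⟨m (j, g), ?_⟩
          simp only [Set.mem_iInter]
          rintro (_ | l) hl
          · exact mem_ball_zero_iff.2 ((hmax (j, g)).trans_lt hlt)
          · exact hmB (j, g) l (by rintro rfl; exact ho hl)
    obtain ⟨x, hx⟩ := hel
    simp only [Set.mem_iInter] at hx
    have h1 : ‖x‖ < ‖q‖ := mem_ball_zero_iff.1 (hx none (Finset.mem_univ _))
    have h2 : ‖q‖ ≤ ‖x‖ :=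
      hqmin (Set.mem_iInter.2 fun j => hx (some j) (Finset.mem_univ _))
    exact absurd h1 (not_lt.2 h2)
  have hqB : q ∈ B (i, f) := by
    intro j hj
    have := hq' j
    rwa [hgj j hj] at this
  have := chelly_unique (hBconv (i, f)) (hmB _) hqB (hm _) hqp
  rw [← this, ← hgi]
  exact hq' i


/-- **The Colorful Helly Theorem** (Bárány–Lovász).
Let `𝓚 1, …, 𝓚 (d+1)` be `d+1` finite families of convex sets in `ℝ^d` such that every
"colorful" choice `K 1 ∈ 𝓚 1, …, K (d+1) ∈ 𝓚 (d+1)` has nonempty intersection.  Then some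
family `𝓚 i` has nonempty total intersection. -/
theorem colorful_helly (d : ℕ)
    (𝓚 : Fin (d + 1) → Set (Set (EuclideanSpace ℝ (Fin d))))
    (hfin : ∀ i, (𝓚 i).Finite)
    (hconv : ∀ i, ∀ K ∈ 𝓚 i, Convex ℝ K)
    (hcolorful : ∀ f : (i : Fin (d + 1)) → Set (EuclideanSpace ℝ (Fin d)),
      (∀ i, f i ∈ 𝓚 i) → (⋂ i, f i).Nonempty) :
    ∃ i : Fin (d + 1), (⋂₀ 𝓚 i).Nonempty := by
  classical
  by_cases hE : ∃ i, 𝓚 i = ∅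
  · obtain ⟨i, hi⟩ := hE
    exact ⟨i, by simp [hi]⟩
  push Not at hE
  have : ∀ i, Finite (𝓚 i) := fun i => (hfin i).to_subtype
  have : ∀ i, Nonempty (𝓚 i) := fun i => (hE i).to_subtype
  have hx : ∀ f : (∀ i, 𝓚 i), ∃ x, ∀ i, x ∈ (f i).1 := fun f => by
    obtain ⟨x, hx⟩ := hcolorful (fun i => (f i).1) (fun i => (f i).2)
    exact ⟨x, Set.mem_iInter.1 hx⟩
  choose x hx using hx
  obtain ⟨i, p, hp⟩ := chelly_compact d (fun i => 𝓚 i)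
    (fun i K => convexHull ℝ (x '' {f | f i = K}))
    (fun i K => convex_convexHull _ _)
    (fun i K => ((Set.toFinite {f : (∀ i, 𝓚 i) | f i = K}).image x).isCompact_convexHull ℝ)
    (fun f => ⟨x f, Set.mem_iInter.2 fun i => subset_convexHull _ _ ⟨f, rfl, rfl⟩⟩)
  refine ⟨i, p, fun K hK => ?_⟩
  refine convexHull_min ?_ (hconv i K hK) (Set.mem_iInter.1 hp ⟨K, hK⟩)
  rintro _ ⟨f, hf, rfl⟩
  have h := hx f i
  have hf2 : f i = ⟨K, hK⟩ := hf
  rw [hf2] at h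
  exact h
end

section
/- Let V = V_1 ∪ ... ∪ V_{d+1} be a partition of a finite vertex set V, and let X be a d-Leray simplicial complex on V over a field F. View each V_i as a 0-dimensional complex and suppose that X contains the join V_1 * ... * V_{d+1} (i.e., every subset of V containing at most one vertex from each part V_i is a simplex of X). Then there exists an index 1 ≤ i ≤ d+1 such that V_i is a simplex of X. -/
open Finset

/-- An abstract simplicial complex on the vertex type `V`: a set of finite subsets
("simplices") closed under taking subsets. -/
def IsComplex {V : Type*} (X : Set (Finset V)) : Prop :=
  ∀ σ ∈ X, ∀ τ, τ ⊆ σ → τ ∈ X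

variable {V : Type*}

/-- The induced subcomplex `X[S] = {σ ∈ X : σ ⊆ S}`. -/
def induce (X : Set (Finset V)) (S : Finset V) : Set (Finset V) :=
  {σ | σ ∈ X ∧ σ ⊆ S}

/-- The link `lk(X,τ) = {σ : σ ∪ τ ∈ X, σ ∩ τ = ∅}`; it is the void complex if `τ ∉ X`. -/
def link [DecidableEq V] (X : Set (Finset V)) (τ : Finset V) : Set (Finset V) :=
  {σ | σ ∪ τ ∈ X ∧ Disjoint σ τ}

/-- The star `str(X,τ) = {σ ∈ X : σ ∪ τ ∈ X}`. -/
def star [DecidableEq V] (X : Set (Finset V)) (τ : Finset V) : Set (Finset V) :=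
  {σ | σ ∈ X ∧ σ ∪ τ ∈ X}

/-- The Alexander dual `X^∨ = {A ⊆ V : V \ A ∉ X}` of a complex on the finite vertex set
`V`. -/
def alexDual [Fintype V] [DecidableEq V] (X : Set (Finset V)) : Set (Finset V) :=
  {A | Aᶜ ∉ X}

section Homology

variable (F : Type) [Field F]

/-- The faces of `X` of cardinality `n` (i.e. of dimension `n-1`). -/
def Face (X : Set (Finset V)) (n : ℕ) : Type _ :=
  {σ : Finset V // σ ∈ X ∧ σ.card = n}

/-- Simplicial chains in dimension `n-1`: formal `F`-linear combinations of faces of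
cardinality `n`.  Since the empty face spans the degree `n = 0` part, this yields the
*augmented* simplicial chain complex of `X`. -/
def SChain (X : Set (Finset V)) (n : ℕ) : Type _ := Face X n →₀ F

noncomputable instance (X : Set (Finset V)) (n : ℕ) : AddCommGroup (SChain F X n) :=
  Finsupp.instAddCommGroup

noncomputable instance (X : Set (Finset V)) (n : ℕ) : Module F (SChain F X n) :=
  Finsupp.module (Face X n) F

variable [LinearOrder V]

open Classical in
/-- The boundary of a face of cardinality `n+1`: the alternating sum of its codimension-one
subfaces, with signs determined by the linear order on the vertices. -/
noncomputable def bdryElem (X : Set (Finset V)) (n : ℕ) (σ : Face X (n+1)) :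
    SChain F X n :=
  ∑ x ∈ σ.1.attach,
    if h : σ.1.erase ↑x ∈ X then
      ((-1 : F) ^ ((σ.1.filter (fun y => y < (x : V))).card)) •
        (Finsupp.single (⟨σ.1.erase ↑x, h, by
          rw [Finset.card_erase_of_mem x.2, σ.2.2]; rfl⟩ : Face X n) 1 : SChain F X n)
    else 0

/-- The simplicial boundary map (in degree `0` it is the augmentation `C_0 → C_{-1} ≅ F`
encoded by `scyc`). -/
noncomputable def sbdry (X : Set (Finset V)) (n : ℕ) :
    SChain F X (n+1) →ₗ[F] SChain F X n :=
  Finsupp.lsum F fun σ => LinearMap.toSpanSingleton F (SChain F X n) (bdryElem F X n σ)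

/-- The cycles of the augmented simplicial chain complex. -/
noncomputable def scyc (X : Set (Finset V)) : (n : ℕ) → Submodule F (SChain F X n)
  | 0 => ⊤
  | (n+1) => LinearMap.ker (sbdry F X n)

/-- `RH F X n` is the reduced simplicial homology `h̃_{n-1}(X; F)` of `X` with coefficients
in `F` (faces of cardinality `n` have dimension `n-1`). -/
abbrev RH (X : Set (Finset V)) (n : ℕ) : Type _ :=
  scyc F X n ⧸ Submodule.comap (scyc F X n).subtype (LinearMap.range (sbdry F X n))

/-- `X` is `d`-Leray over `F`: every induced subcomplex has vanishing reduced homology in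
all dimensions `i ≥ d`. -/
def IsLeray (d : ℕ) (X : Set (Finset V)) : Prop :=
  ∀ S : Finset V, ∀ i : ℕ, d ≤ i → Subsingleton (RH F (induce X S) (i+1))

end Homology


section Helpers

set_option linter.unusedSectionVars false

variable {U : Type} [Fintype U] [LinearOrder U] {F : Type} [Field F]

/-- sign -/
def sg (F : Type) [Field F] (v : U) (t : Finset U) : F :=
  (-1 : F) ^ (t.filter (fun y => y < v)).card

lemma sg_sq (v : U) (t : Finset U) : sg F v t * sg F v t = 1 := by
  unfold sg; rw [← mul_pow]; simp

lemma sg_ne (v : U) (t : Finset U) : sg F v t ≠ 0 := by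
  unfold sg; exact pow_ne_zero _ (by simp)

lemma sg_insert (v w : U) (t : Finset U) (h : v ∉ t) :
    sg F w (insert v t) = sg F w t * (if v < w then -1 else 1) := by
  unfold sg
  rw [Finset.filter_insert]
  split_ifs with h1
  · rw [Finset.card_insert_of_notMem (by simp [h]), pow_succ]
  · simp

lemma sg_erase (v : U) (t : Finset U) : sg F v (t.erase v) = sg F v t := by
  unfold sg
  congr 2
  ext y; simp only [Finset.mem_filter, Finset.mem_erase]
  constructor
  · rintro ⟨⟨_, h⟩, h2⟩; exact ⟨h, h2⟩
  · rintro ⟨h, h2⟩; exact ⟨⟨h2.ne, h⟩, h2⟩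

/-- contraction -/
def io (F : Type) [Field F] (v : U) : Module.End F (Finset U → F) where
  toFun f := fun t => if v ∈ t then 0 else sg F v t * f (insert v t)
  map_add' f g := by ext t; simp only [Pi.add_apply]; split_ifs <;> ring
  map_smul' a f := by
    ext t; simp only [Pi.smul_apply, smul_eq_mul, RingHom.id_apply]; split_ifs <;> ring

lemma io_apply (v : U) (f : Finset U → F) (t : Finset U) :
    io F v f t = if v ∈ t then 0 else sg F v t * f (insert v t) := rfl

lemma io_sq (v : U) : io F v * io F v = 0 := by
  refine LinearMap.ext fun f => funext fun t => ?_
  simp only [Module.End.mul_apply, io_apply]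
  simp

lemma io_anti (v w : U) : io F v * io F w = -(io F w * io F v) := by
  by_cases hvw : v = w
  · subst hvw; simp [io_sq]
  refine LinearMap.ext fun f => funext fun t => ?_
  simp only [Module.End.mul_apply, io_apply, LinearMap.neg_apply, Pi.neg_apply]
  by_cases hv : v ∈ t
  · simp [hv]
  by_cases hw : w ∈ t
  · simp [hw]
  have hvw' : w ≠ v := fun h => hvw h.symm
  simp only [hv, hw, Finset.mem_insert, hvw, hvw', or_self, if_false]
  rw [sg_insert v w t hv, sg_insert w v t hw, Finset.insert_comm]
  rcases lt_or_gt_of_ne hvw with h | h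
  · simp [h, h.not_gt]; ring
  · simp [h, h.not_gt]; ring

/-- partial boundary -/
noncomputable def bd (F : Type) [Field F] (S : Finset U) : Module.End F (Finset U → F) :=
  ∑ v ∈ S, io F v

lemma io_bd (v : U) (S : Finset U) : io F v * bd F S = -(bd F S * io F v) := by
  unfold bd
  rw [Finset.mul_sum, Finset.sum_mul, ← Finset.sum_neg_distrib]
  exact Finset.sum_congr rfl fun w _ => io_anti v w

lemma bd_anti (S T : Finset U) : bd F S * bd F T = -(bd F T * bd F S) := by
  conv_lhs => rw [bd, Finset.sum_mul]
  conv_rhs => rw [bd, bd, Finset.mul_sum, ← Finset.sum_neg_distrib]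
  exact Finset.sum_congr rfl fun w _ => io_bd w T

lemma bd_sq (S : Finset U) : bd F S * bd F S = 0 := by
  classical
  induction S using Finset.induction_on with
  | empty => simp [bd]
  | insert a s ha ih =>
    have : bd F (insert a s) = io F a + bd F s := by
      unfold bd; rw [Finset.sum_insert ha]
    rw [this, add_mul, mul_add, mul_add, io_sq, ih, io_bd]
    simp

lemma bd_apply (S : Finset U) (f : Finset U → F) (t : Finset U) :
    bd F S f t = ∑ v ∈ S, if v ∈ t then 0 else sg F v t * f (insert v t) := by
  unfold bd
  rw [LinearMap.sum_apply, Finset.sum_apply]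
  rfl

/-- basis chain -/
def dl (F : Type) [Field F] (A : Finset U) : Finset U → F := Pi.single A 1

lemma dl_apply (A s : Finset U) : dl F A s = if s = A then 1 else 0 := by
  unfold dl; rw [Pi.single_apply]

lemma io_dl_mem (v : U) (A : Finset U) (h : v ∈ A) :
    io F v (dl F A) = sg F v A • dl F (A.erase v) := by
  ext t
  simp only [io_apply, dl_apply, Pi.smul_apply, smul_eq_mul]
  by_cases hv : v ∈ t
  · have : t ≠ A.erase v := by rintro rfl; simp at hv
    simp [hv, this]
  · by_cases h2 : t = A.erase v
    · subst h2; simp [Finset.insert_erase h, sg_erase]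
    · have : insert v t ≠ A := by rintro rfl; exact h2 (by simp [hv])
      simp [h2, this]

lemma io_dl_not (v : U) (A : Finset U) (h : v ∉ A) : io F v (dl F A) = 0 := by
  ext t
  simp only [io_apply, dl_apply, Pi.zero_apply]
  have : insert v t ≠ A := by rintro rfl; exact h (by simp)
  simp [this]

lemma bd_dl (S A : Finset U) :
    bd F S (dl F A) = ∑ a ∈ S ∩ A, sg F a A • dl F (A.erase a) := by
  unfold bd
  rw [LinearMap.sum_apply, ← Finset.filter_mem_eq_inter, Finset.sum_filter]
  refine Finset.sum_congr rfl fun a _ => ?_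
  split_ifs with h
  · exact io_dl_mem a A h
  · exact io_dl_not a A h

lemma eq_sum_dl (f : Finset U → F) : f = ∑ A, f A • dl F A := by
  ext s
  simp [Finset.sum_apply, dl_apply]

/-- Leray in terms of functions -/
lemma leray_fun {d : ℕ} {X : Set (Finset U)} (hX : IsComplex X) (hL : IsLeray F d X)
    (S : Finset U) (i : ℕ) (hi : d ≤ i) (f : Finset U → F)
    (hf : ∀ s, f s ≠ 0 → s ∈ X ∧ s ⊆ S ∧ s.card = i + 1)
    (hc : bd F univ f = 0) :
    ∃ g : Finset U → F, (∀ s, g s ≠ 0 → s ∈ X ∧ s ⊆ S ∧ s.card = i + 2) ∧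
      bd F univ g = f := by
  classical
  set Y := induce X S with hY
  have hYc : ∀ s ∈ Y, ∀ t, t ⊆ s → t ∈ Y := fun s hs t ht =>
    ⟨hX s hs.1 t ht, ht.trans hs.2⟩
  let ex : ∀ n, SChain F Y n →ₗ[F] (Finset U → F) := fun n =>
    Finsupp.linearCombination F (fun s : Face Y n => dl F s.1)
  have ex_single : ∀ n (s : Face Y n) (a : F),
      ex n (Finsupp.single s a : Face Y n →₀ F) = a • dl F s.1 := fun n s a =>
    Finsupp.linearCombination_single F a s
  have ex_apply : ∀ n (x : SChain F Y n) (s : Face Y n), ex n x s.1 = (show Face Y n →₀ F from x) s := by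
    intro n x s
    change (Finsupp.linearCombination F (fun s : Face Y n => dl F s.1) x) s.1 = _
    induction x using Finsupp.induction_linear with
    | zero => simp
    | add a b ha hb =>
      rw [map_add, Pi.add_apply, ha, hb]; rfl
    | single a b =>
      rw [Finsupp.linearCombination_single]
      simp only [Pi.smul_apply, dl_apply, smul_eq_mul]
      by_cases h : s = a
      · subst h; simp
      · have : s.1 ≠ a.1 := fun h' => h (Subtype.ext h')
        simp [this, Ne.symm h]
  have ex_inj : ∀ n, Function.Injective (ex n) := by
    intro n x y hxy
    refine Finsupp.ext (M := F) fun s => ?_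
    have := congrFun hxy s.1
    rw [ex_apply, ex_apply] at this
    exact this
  have ex_supp : ∀ n (x : SChain F Y n) (s : Finset U), ex n x s ≠ 0 → s ∈ Y ∧ s.card = n := by
    intro n x s h
    have e : ex n x = Finsupp.sum (show Face Y n →₀ F from x) (fun s a => a • dl F s.1) :=
      Finsupp.linearCombination_apply F _
    rw [e, Finsupp.sum, Finset.sum_apply] at h
    obtain ⟨a, _, ha⟩ := Finset.exists_ne_zero_of_sum_ne_zero h
    simp only [Pi.smul_apply, dl_apply, smul_eq_mul] at ha
    by_cases h : s = a.1
    · rw [h]; exact a.2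
    · simp [h] at ha
  have ex_bd : ∀ n (x : SChain F Y (n+1)), ex n (sbdry F Y n x) = bd F univ (ex (n+1) x) := by
    intro n x
    have key : (ex n).comp (sbdry F Y n) = (bd F univ).comp (ex (n+1)) := by
      refine Finsupp.lhom_ext (M := F) fun a b => ?_
      have h1 : sbdry F Y n (Finsupp.single a b : Face Y (n+1) →₀ F) = b • bdryElem F Y n a :=
        Finsupp.lsum_single (R := F) (S := F) _ _ _
      have h2 : ex n (bdryElem F Y n a) = bd F univ (dl F a.1) := by
        rw [bd_dl, Finset.univ_inter, ← Finset.sum_attach a.1]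
        unfold bdryElem
        rw [map_sum]
        refine Finset.sum_congr rfl fun v _ => ?_
        have hv : a.1.erase v.1 ∈ Y := hYc _ a.2.1 _ (Finset.erase_subset _ _)
        refine (congrArg (ex n) (dif_pos hv)).trans ?_
        refine ((ex n).map_smul _ _).trans ?_
        refine (congrArg _ (ex_single n _ 1)).trans ?_
        rw [one_smul]
        rfl
      refine (congrArg (ex n) h1).trans ?_
      refine ((ex n).map_smul _ _).trans ?_
      refine Eq.trans ?_ (congrArg (bd F univ) (ex_single (n+1) a b)).symm
      rw [map_smul, h2]
    exact LinearMap.congr_fun key x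
  have ex_surj : ∀ n (f : Finset U → F), (∀ s, f s ≠ 0 → s ∈ Y ∧ s.card = n) → ∃ x, ex n x = f := by
    intro n f hf
    have : Finite (Face Y n) := Subtype.finite
    let x : Face Y n →₀ F := Finsupp.equivFunOnFinite.symm (fun s => f s.1)
    refine ⟨x, ?_⟩
    ext s
    by_cases hs : s ∈ Y ∧ s.card = n
    · exact ex_apply n x ⟨s, hs⟩
    · have h1 : f s = 0 := by by_contra h; exact hs (hf s h)
      have h2 : ex n x s = 0 := by by_contra h; exact hs (ex_supp n x s h)
      rw [h1, h2]
  obtain ⟨x, hx⟩ := ex_surj (i+1) f fun s hs => ⟨⟨(hf s hs).1, (hf s hs).2.1⟩, (hf s hs).2.2⟩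
  have hxc : x ∈ scyc F Y (i+1) := by
    change sbdry F Y i x = 0
    apply ex_inj
    rw [ex_bd, hx, hc, map_zero]
  have hsub : Subsingleton (RH F Y (i+1)) := hL S i hi
  have hmem := (Submodule.Quotient.mk_eq_zero
    (Submodule.comap (scyc F Y (i+1)).subtype (LinearMap.range (sbdry F Y (i+1)))) (x := ⟨x, hxc⟩)).1
    (hsub.elim _ _)
  obtain ⟨y, hy⟩ := hmem
  refine ⟨ex (i+2) y, fun s hs => ?_, ?_⟩
  · have := ex_supp _ y s hs
    exact ⟨this.1.1, this.1.2, this.2⟩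
  · rw [← ex_bd]
    have hy' : sbdry F Y (i+1) y = x := hy
    rw [hy', hx]

variable {m : ℕ} (c : U → Fin m)

/-- colour part -/
def pt (A : Finset U) (i : Fin m) : Finset U := A.filter (fun v => c v = i)

variable (F) in
/-- product of partial boundaries -/
noncomputable def Qo (l : List (Fin m)) : Module.End F (Finset U → F) :=
  (l.map (fun i => bd F (pt c univ i))).prod

lemma Qo_cons (i : Fin m) (l : List (Fin m)) :
    Qo F c (i :: l) = bd F (pt c univ i) * Qo F c l := by
  simp [Qo]

lemma bd_univ : bd F (univ : Finset U) = ∑ i, bd F (pt c univ i) := by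
  unfold bd pt
  exact (Finset.sum_fiberwise univ c (fun v => io F v)).symm

lemma bd_anti3 (S T : Finset U) (R : Module.End F (Finset U → F)) :
    bd F S * (bd F T * R) = (-1 : F) • (bd F T * (bd F S * R)) := by
  refine LinearMap.ext fun f => ?_
  have := LinearMap.congr_fun (bd_anti (F := F) S T) (R f)
  simpa using this

lemma bd_Qo (S : Finset U) (l : List (Fin m)) :
    bd F S * Qo F c l = (-1 : F) ^ l.length • (Qo F c l * bd F S) := by
  induction l with
  | nil => simp [Qo]
  | cons j l ih =>
    rw [Qo_cons, bd_anti3, ih, List.length_cons, pow_succ, mul_smul_comm, mul_assoc, smul_smul,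
      mul_comm (-1 : F)]

lemma Qo_split (i : Fin m) (l : List (Fin m)) (hi : i ∈ l) :
    ∃ η : F, Qo F c l = η • (bd F (pt c univ i) * Qo F c (l.erase i)) ∧
      Qo F c l = (η * (-1 : F) ^ (l.length - 1)) • (Qo F c (l.erase i) * bd F (pt c univ i)) := by
  induction l with
  | nil => simp at hi
  | cons j l ih =>
    by_cases hij : j = i
    · subst hij
      refine ⟨1, ?_, ?_⟩
      · simp [Qo_cons]
      · simp [Qo_cons, bd_Qo]
    · have hil : i ∈ l := by
        rcases List.mem_cons.1 hi with h | h
        · exact absurd h.symm hij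
        · exact h
      obtain ⟨η, h1, h2⟩ := ih hil
      have hne : (j == i) = false := by simp [hij]
      rw [List.erase_cons, hne]
      simp only [Bool.false_eq_true, if_false, Qo_cons]
      refine ⟨-η, ?_, ?_⟩
      · rw [h1, mul_smul_comm, bd_anti3, smul_smul, mul_neg_one]
      · rw [h2, mul_smul_comm, mul_assoc]
        have : l.length = (l.length - 1) + 1 := by
          have := List.length_pos_of_mem hil; omega
        congr 1
        rw [List.length_cons, Nat.add_sub_cancel]
        conv_rhs => rw [this, pow_succ]
        ring

lemma bd_Qo_zero (i : Fin m) (l : List (Fin m)) (hi : i ∈ l) :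
    bd F (pt c univ i) * Qo F c l = 0 := by
  obtain ⟨η, h1, _⟩ := Qo_split (F := F) c i l hi
  rw [h1, mul_smul_comm, ← mul_assoc, bd_sq]; simp

lemma Qo_bd_zero (i : Fin m) (l : List (Fin m)) (hi : i ∈ l) :
    Qo F c l * bd F (pt c univ i) = 0 := by
  obtain ⟨η, _, h1⟩ := Qo_split (F := F) c i l hi
  rw [h1, smul_mul_assoc, mul_assoc, bd_sq]; simp

lemma bd_supp (S : Finset U) (f : Finset U → F) (t : Finset U) (h : bd F S f t ≠ 0) :
    ∃ v ∈ S, v ∉ t ∧ f (insert v t) ≠ 0 := by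
  rw [bd_apply] at h
  obtain ⟨v, hv, h⟩ := Finset.exists_ne_zero_of_sum_ne_zero h
  by_cases hvt : v ∈ t
  · simp [hvt] at h
  · simp only [hvt, if_false] at h
    exact ⟨v, hv, hvt, right_ne_zero_of_mul h⟩

lemma mem_pt (A : Finset U) (i : Fin m) (v : U) : v ∈ pt c A i ↔ v ∈ A ∧ c v = i := by
  simp [pt]

lemma card_pt_insert (v : U) (t : Finset U) (hv : v ∉ t) (i : Fin m) :
    (pt c (insert v t) i).card = (pt c t i).card + if c v = i then 1 else 0 := by
  unfold pt
  rw [Finset.filter_insert]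
  split_ifs with h
  · rw [Finset.card_insert_of_notMem (by simp [hv])]
  · rfl

lemma card_pt_erase (v : U) (t : Finset U) (hv : v ∈ t) (i : Fin m) :
    (pt c t i).card = (pt c (t.erase v) i).card + if c v = i then 1 else 0 := by
  rw [← card_pt_insert c v (t.erase v) (by simp), Finset.insert_erase hv]

lemma card_sum_pt (t : Finset U) : t.card = ∑ i, (pt c t i).card :=
  Finset.card_eq_sum_card_fiberwise (fun _ _ => by simp)

lemma Qo_supp (A : Finset U) (l : List (Fin m)) (s : Finset U) (h : Qo F c l (dl F A) s ≠ 0) :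
    s ⊆ A ∧ ∀ i, (pt c s i).card + l.count i = (pt c A i).card := by
  induction l generalizing s with
  | nil =>
    have h' : dl F A s ≠ 0 := by simpa [Qo] using h
    rw [dl_apply] at h'
    have : s = A := by by_contra hs; simp [hs] at h'
    subst this; simp
  | cons j l ih =>
    rw [Qo_cons, Module.End.mul_apply] at h
    obtain ⟨v, hv, hvs, h⟩ := bd_supp _ _ _ h
    obtain ⟨h1, h2⟩ := ih _ h
    rw [mem_pt] at hv
    refine ⟨(Finset.subset_insert _ _).trans h1, fun i => ?_⟩
    rw [← h2 i, card_pt_insert c v s hvs, hv.2, List.count_cons]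
    simp only [beq_iff_eq]
    omega

lemma Qo_ne (y : Fin m → U) (hy : ∀ i, c (y i) = i) (l : List (Fin m)) (hl : l.Nodup)
    (t : Finset U) (ht : ∀ i ∈ l, y i ∉ t) :
    Qo F c l (dl F (t ∪ l.toFinset.image y)) t ≠ 0 := by
  induction l generalizing t with
  | nil => simp [Qo, dl_apply]
  | cons i l ih =>
    have e : t ∪ (i :: l).toFinset.image y = insert (y i) t ∪ l.toFinset.image y := by
      rw [List.toFinset_cons, Finset.image_insert]
      ext; simp
    rw [List.nodup_cons] at hl
    have hi := ht i (by simp)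
    have key := ih hl.2 (insert (y i) t) (by
      intro j hj
      rw [Finset.mem_insert, not_or]
      refine ⟨fun h => hl.1 ?_, ht j (by simp [hj])⟩
      rw [← hy i, ← h, hy j]; exact hj)
    rw [e, Qo_cons, Module.End.mul_apply, bd_apply, Finset.sum_eq_single (y i)]
    · rw [if_neg hi]
      exact mul_ne_zero (sg_ne _ _) key
    · intro u hu hne
      rw [mem_pt] at hu
      split_ifs with hut
      · rfl
      · by_contra h
        have h := (Qo_supp c _ _ _ (right_ne_zero_of_mul h)).1 (Finset.mem_insert_self u t)
        simp only [Finset.mem_union, Finset.mem_insert, hne, hut, Finset.mem_image, or_self,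
          false_or] at h
        obtain ⟨j, _, hj⟩ := h
        apply hne
        rw [← hj, ← hu.2, ← hj, hy]
    · intro h; exact absurd ((mem_pt c _ _ _).2 ⟨Finset.mem_univ _, hy i⟩) h

/-- all colours appear exactly twice -/
def Mi (A : Finset U) : Prop := ∀ i, (pt c A i).card = 2

/-- all colours appear at least twice -/
def Go (A : Finset U) : Prop := ∀ i, 2 ≤ (pt c A i).card

open Classical in
variable (F) in
/-- truncation -/
noncomputable def To : Module.End F (Finset U → F) where
  toFun f := fun t => if Mi c t then f t else 0
  map_add' f g := by ext t; simp only [Pi.add_apply]; split_ifs <;> simp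
  map_smul' a f := by
    ext t; simp only [Pi.smul_apply, smul_eq_mul, RingHom.id_apply]; split_ifs <;> ring

open Classical in
lemma To_apply (f : Finset U → F) (t : Finset U) : To F c f t = if Mi c t then f t else 0 := rfl

lemma To_dl (A : Finset U) (h : Mi c A) : To F c (dl F A) = dl F A := by
  classical
  ext t
  rw [To_apply]
  split_ifs with h1
  · rfl
  · rw [dl_apply, if_neg]; rintro rfl; exact h1 h

lemma To_dl_not (A : Finset U) (h : ¬ Mi c A) : To F c (dl F A) = 0 := by
  classical
  ext t
  rw [To_apply]
  split_ifs with h1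
  · rw [dl_apply, if_neg]
    · rfl
    · rintro rfl; exact h h1
  · rfl

lemma dl_ne {A s : Finset U} (h : dl F A s ≠ 0) : s = A := by
  by_contra hs; rw [dl_apply, if_neg hs] at h; exact h rfl

lemma Qo_To_bd (l : List (Fin m)) (hl : ∀ i, i ∈ l) (A : Finset U) :
    Qo F c l (To F c (bd F univ (dl F A))) = 0 := by
  classical
  by_cases h : ∃ a ∈ A, Mi c (A.erase a)
  · obtain ⟨a, ha, hM⟩ := h
    have : To F c (bd F univ (dl F A)) = bd F (pt c univ (c a)) (dl F A) := by
      ext s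
      rw [To_apply]
      split_ifs with hs
      · rw [bd_univ c, LinearMap.sum_apply, Finset.sum_apply]
        refine Finset.sum_eq_single _ (fun j _ hj => ?_) (by simp)
        by_contra h
        obtain ⟨v, hv, hvs, h⟩ := bd_supp _ _ _ h
        have e := dl_ne h
        rw [mem_pt] at hv
        have h1 := card_pt_insert c v s hvs (c a)
        rw [e, hs, card_pt_erase c a A ha, hM, if_pos rfl, hv.2, if_neg hj] at h1
        omega
      · by_contra h
        obtain ⟨v, hv, hvs, h⟩ := bd_supp _ _ _ (Ne.symm h)
        have e := dl_ne h
        rw [mem_pt] at hv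
        apply hs
        intro i
        have h1 := card_pt_insert c v s hvs i
        rw [e, card_pt_erase c a A ha, hM, hv.2] at h1
        omega
    rw [this, ← Module.End.mul_apply, Qo_bd_zero c _ _ (hl _)]; rfl
  · have : To F c (bd F univ (dl F A)) = 0 := by
      ext s
      rw [To_apply]
      split_ifs with hs
      · by_contra h'
        obtain ⟨v, hv, hvs, h'⟩ := bd_supp _ _ _ h'
        have e := dl_ne h'
        apply h
        refine ⟨v, by rw [← e]; simp, ?_⟩
        rw [← e, Finset.erase_insert hvs]; exact hs
      · rfl
    rw [this, map_zero]

/-- linear extension -/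
noncomputable def mkl (w : Finset U → Finset U → F) : Module.End F (Finset U → F) where
  toFun f := ∑ A, f A • w A
  map_add' f g := by simp [add_smul, Finset.sum_add_distrib]
  map_smul' a f := by simp [mul_smul, Finset.smul_sum]

lemma mk_apply (w : Finset U → Finset U → F) (f : Finset U → F) : mkl w f = ∑ A, f A • w A := rfl

lemma mk_dl (w : Finset U → Finset U → F) (A : Finset U) : mkl w (dl F A) = w A := by
  rw [mk_apply, Finset.sum_eq_single A]
  · simp [dl_apply]
  · intro b _ hb; simp [dl_apply, hb]
  · simp

lemma mk_congr (w w' : Finset U → Finset U → F) (f : Finset U → F)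
    (h : ∀ A, f A ≠ 0 → w A = w' A) : mkl w f = mkl w' f := by
  rw [mk_apply, mk_apply]
  refine Finset.sum_congr rfl fun A _ => ?_
  by_cases hf : f A = 0
  · simp [hf]
  · rw [h A hf]

lemma bd_dl_supp {A s : Finset U} (h : bd F univ (dl F A) s ≠ 0) : ∃ a ∈ A, s = A.erase a := by
  obtain ⟨v, _, hvs, h⟩ := bd_supp _ _ _ h
  have e := dl_ne h
  exact ⟨v, by rw [← e]; simp, by rw [← e, Finset.erase_insert hvs]⟩

/-- the properties of the family at A -/
def Pr (d : ℕ) (X : Set (Finset U)) (Q T : Module.End F (Finset U → F)) (ε : F)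
    (w : Finset U → Finset U → F) (A : Finset U) : Prop :=
  (¬ Go c A → w A = 0) ∧ (∀ s, w A s ≠ 0 → s ∈ X ∧ s ⊆ A ∧ s.card + d = A.card) ∧
    bd F univ (w A) = ε • mkl w (bd F univ (dl F A)) + Q (T (dl F A))

lemma exists_w {d : ℕ} (c : U → Fin (d + 1)) {X : Set (Finset U)} (hX : IsComplex X)
    (hL : IsLeray F d X) (hJ : ∀ s : Finset U, (∀ i, (pt c s i).card ≤ 1) → s ∈ X) (ε : F) :
    ∃ w : Finset U → Finset U → F,
      ∀ A, Pr c d X (Qo F c (List.finRange (d+1))) (To F c) ε w A := by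
  classical
  set Q := Qo F c (List.finRange (d+1)) with hQ
  suffices H : ∀ n : ℕ, ∃ w : Finset U → Finset U → F, ∀ A, A.card < n →
      Pr c d X Q (To F c) ε w A by
    obtain ⟨w, hw⟩ := H (Fintype.card U + 1)
    exact ⟨w, fun A => hw A (Nat.lt_succ_of_le (Finset.card_le_univ A))⟩
  intro n
  induction n with
  | zero => exact ⟨0, fun A h => absurd h (by simp)⟩
  | succ n ih =>
    obtain ⟨w, hw⟩ := ih
    have hsupp : ∀ A : Finset U, A.card = n → ∀ B, bd F univ (dl F A) B ≠ 0 → B.card < n := by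
      intro A hA B hB
      obtain ⟨a, ha, rfl⟩ := bd_dl_supp hB
      rw [← hA]; exact Finset.card_erase_lt_of_mem ha
    have hlin : ∀ h : Finset U → F, (∀ B, h B ≠ 0 → B.card < n) →
        bd F univ (mkl w h) = ε • mkl w (bd F univ h) + Q (To F c h) := by
      intro h hh
      have e : ∀ L : Module.End F (Finset U → F), L h = ∑ B, h B • L (dl F B) := by
        intro L
        conv_lhs => rw [eq_sum_dl h]
        rw [map_sum]; simp
      have e1 := e (bd F univ * mkl w)
      have e2 := e (ε • (mkl w * bd F univ) + Q * To F c)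
      have : (bd F univ * mkl w : Module.End F (Finset U → F)) h =
          (ε • (mkl w * bd F univ) + Q * To F c : Module.End F (Finset U → F)) h := by
        rw [e1, e2]
        refine Finset.sum_congr rfl fun B _ => ?_
        by_cases hB : h B = 0
        · simp [hB]
        · congr 1
          have := (hw B (hh B hB)).2.2
          simpa [mk_dl] using this
      simpa using this
    have step : ∀ A : Finset U, ∃ g : Finset U → F, A.card = n →
        ((¬ Go c A → g = 0) ∧ (∀ s, g s ≠ 0 → s ∈ X ∧ s ⊆ A ∧ s.card + d = A.card) ∧
          bd F univ g = ε • mkl w (bd F univ (dl F A)) + Q (To F c (dl F A))) := by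
      intro A
      by_cases hA : A.card = n
      swap
      · exact ⟨0, fun h => absurd h hA⟩
      by_cases hG : Go c A
      · have hcard : 2 * (d + 1) ≤ A.card := by
          rw [card_sum_pt c A]
          calc 2 * (d + 1) = ∑ i : Fin (d+1), 2 := by simp [mul_comm]
            _ ≤ _ := Finset.sum_le_sum fun i _ => hG i
        obtain ⟨g, hg1, hg2⟩ := leray_fun hX hL A (A.card - d - 2) (by omega)
          (ε • mkl w (bd F univ (dl F A)) + Q (To F c (dl F A))) (by
            intro s hs
            by_cases h1 : mkl w (bd F univ (dl F A)) s = 0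
            · have h2 : Q (To F c (dl F A)) s ≠ 0 := by
                intro h2; apply hs; simp [h1, h2]
              by_cases hM : Mi c A
              · rw [To_dl c A hM] at h2
                obtain ⟨h3, h4⟩ := Qo_supp c _ _ _ h2
                have h5 : ∀ i, (pt c s i).card = 1 := by
                  intro i
                  have := h4 i
                  rw [hM i, List.count_eq_one_of_mem (List.nodup_finRange _) (List.mem_finRange i)] at this
                  omega
                refine ⟨hJ s fun i => (h5 i).le, h3, ?_⟩
                have h6 : A.card = 2 * (d + 1) := by
                  rw [card_sum_pt c A, Finset.sum_congr rfl fun i _ => hM i]; simp [mul_comm]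
                have h7 : s.card = d + 1 := by
                  rw [card_sum_pt c s, Finset.sum_congr rfl fun i _ => h5 i]; simp
                omega
              · rw [To_dl_not c A hM, map_zero] at h2
                exact absurd rfl h2
            · rw [mk_apply, Finset.sum_apply] at h1
              obtain ⟨B, _, hB⟩ := Finset.exists_ne_zero_of_sum_ne_zero h1
              rw [Pi.smul_apply, smul_eq_mul] at hB
              have hB1 := left_ne_zero_of_mul hB
              obtain ⟨h3, h4, h5⟩ := (hw B (hsupp A hA B hB1)).2.1 s (right_ne_zero_of_mul hB)
              obtain ⟨a, ha, rfl⟩ := bd_dl_supp hB1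
              refine ⟨h3, h4.trans (Finset.erase_subset _ _), ?_⟩
              rw [Finset.card_erase_of_mem ha] at h5
              omega) (by
            have z1 : bd F univ (Q (To F c (dl F A))) = 0 := by
              rw [← Module.End.mul_apply, bd_univ c, Finset.sum_mul,
                Finset.sum_eq_zero fun i _ => bd_Qo_zero c i _ (List.mem_finRange i)]
              rfl
            have z2 : bd F univ (bd F univ (dl F A)) = 0 := by
              rw [← Module.End.mul_apply, bd_sq]; rfl
            rw [map_add, map_smul, z1, hlin _ (hsupp A hA), z2, Qo_To_bd c _ List.mem_finRange]
            simp)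
        refine ⟨g, fun _ => ⟨fun h => absurd hG h, fun s hs => ?_, hg2⟩⟩
        obtain ⟨h1, h2, h3⟩ := hg1 s hs
        exact ⟨h1, h2, by omega⟩
      · refine ⟨0, fun _ => ⟨fun _ => rfl, fun s hs => absurd rfl hs, ?_⟩⟩
        rw [To_dl_not c A (fun h => hG fun i => (h i).ge), mk_congr w 0]
        · simp [mk_apply]
        · intro B hB
          have hBn := hsupp A hA B hB
          obtain ⟨a, ha, rfl⟩ := bd_dl_supp hB
          refine (hw _ hBn).1 fun h => hG fun i => ?_
          have := h i
          have := card_pt_erase c a A ha i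
          omega
    choose g hg using step
    refine ⟨fun A => if A.card = n then g A else w A, fun A hA => ?_⟩
    have hcg : ∀ B : Finset U, B.card < n → (if B.card = n then g B else w B) = w B :=
      fun B hB => if_neg hB.ne
    have hmk : mkl (fun A => if A.card = n then g A else w A) (bd F univ (dl F A))
        = mkl w (bd F univ (dl F A)) := by
      refine mk_congr _ _ _ fun B hB => hcg B ?_
      obtain ⟨a, ha, rfl⟩ := bd_dl_supp hB
      have := Finset.card_erase_lt_of_mem ha
      omega
    unfold Pr
    rw [hmk]
    by_cases h : A.card = n
    · simp only [h, if_true]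
      have := hg A h
      rw [h] at this; exact this
    · have h' : A.card < n := by omega
      simp only [h, if_false]
      exact hw A h'

lemma final {d : ℕ} (c : U → Fin (d + 1)) {X : Set (Finset U)} (hX : IsComplex X)
    (hL : IsLeray F d X) (hJ : ∀ s : Finset U, (∀ i, (pt c s i).card ≤ 1) → s ∈ X)
    (hN : ∀ i, pt c univ i ∉ X) : False := by
  classical
  have hm : ∀ i, 2 ≤ (pt c univ i).card := by
    intro i
    by_contra h
    apply hN i
    apply hJ
    intro j
    have : pt c (pt c univ i) j ⊆ pt c univ i := Finset.filter_subset _ _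
    have := Finset.card_le_card this
    omega
  set m : Fin (d+1) → ℕ := fun i => (pt c univ i).card with hmdef
  have henum : ∃ (r : U → ℕ) (x : Fin (d+1) → ℕ → U), (∀ v, r v < m (c v)) ∧
      (∀ v, x (c v) (r v) = v) ∧ (∀ i j, j < m i → c (x i j) = i ∧ r (x i j) = j) := by
    have e : ∀ i, ∃ (r : U → ℕ) (x : ℕ → U), (∀ v, c v = i → r v < m i ∧ x (r v) = v) ∧
        (∀ j, j < m i → c (x j) = i ∧ r (x j) = j) := by
      intro i
      let e := (pt c univ i).equivFin
      have hpos : 0 < m i := lt_of_lt_of_le Nat.zero_lt_two (hm i)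
      refine ⟨fun v => if h : v ∈ pt c univ i then (e ⟨v, h⟩ : ℕ) else 0,
        fun j => if h : j < m i then (e.symm ⟨j, h⟩ : U) else (e.symm ⟨0, hpos⟩ : U), ?_, ?_⟩
      · intro v hv
        have hv' : v ∈ pt c univ i := by simp [mem_pt, hv]
        simp only [hv', dif_pos]
        have h2 : (e ⟨v, hv'⟩ : ℕ) < m i := (e ⟨v, hv'⟩).2
        refine ⟨h2, ?_⟩
        rw [dif_pos h2]
        exact congrArg Subtype.val (e.symm_apply_apply ⟨v, hv'⟩)
      · intro j hj
        simp only [hj, dif_pos]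
        have h1 := (e.symm ⟨j, hj⟩).2
        refine ⟨((mem_pt c _ _ _).1 h1).2, ?_⟩
        rw [dif_pos h1]
        exact congrArg Fin.val (e.apply_symm_apply ⟨j, hj⟩)
    choose r x h1 h2 using e
    refine ⟨fun v => r (c v) v, x, fun v => (h1 _ v rfl).1, fun v => (h1 _ v rfl).2, fun i j hj => ?_⟩
    obtain ⟨h3, h4⟩ := h2 i j hj
    refine ⟨h3, ?_⟩
    simp only [h3, h4]
  obtain ⟨r, x, hr, hxr, hx⟩ := henum
  set ε : F := (-1) ^ d with hε
  have hεε : ε * ε = 1 := by rw [hε, ← mul_pow]; simp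
  obtain ⟨w, hw⟩ := exists_w c hX hL hJ ε
  set l := List.finRange (d+1) with hl
  set Q := Qo F c l with hQ
  let A : (Fin (d+1) → ℕ) → Finset U := fun k => univ.filter fun v => r v ≤ k (c v)
  let t : (Fin (d+1) → ℕ) → Finset U := fun k => univ.filter fun v => r v < k (c v)
  have memA : ∀ k v, v ∈ A k ↔ r v ≤ k (c v) := fun k v => by simp [A]
  have memt : ∀ k v, v ∈ t k ↔ r v < k (c v) := fun k v => by simp [t]
  let up : (Fin (d+1) → ℕ) → Fin (d+1) → (Fin (d+1) → ℕ) := fun k i => Function.update k i (k i + 1)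
  let dn : (Fin (d+1) → ℕ) → Fin (d+1) → (Fin (d+1) → ℕ) := fun k i => Function.update k i (k i - 1)
  let K : Finset (Fin (d+1) → ℕ) := Fintype.piFinset fun i => Finset.Ico 1 (m i)
  have memK : ∀ k, k ∈ K ↔ ∀ i, 1 ≤ k i ∧ k i < m i := fun k => by simp [K, Fintype.mem_piFinset]
  have xnt : ∀ k ∈ K, ∀ i, x i (k i) ∉ t k := by
    intro k hk i
    obtain ⟨h1, h2⟩ := hx i (k i) ((memK k).1 hk i).2
    rw [memt, h1, h2]; omega
  have xA : ∀ k ∈ K, ∀ i, x i (k i) ∈ A k := by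
    intro k hk i
    obtain ⟨h1, h2⟩ := hx i (k i) ((memK k).1 hk i).2
    rw [memA, h1, h2]
  have xuniq : ∀ k ∈ K, ∀ v, v ∈ A k → v ∉ t k → v = x (c v) (k (c v)) := by
    intro k hk v h1 h2
    rw [memA] at h1; rw [memt] at h2
    have : r v = k (c v) := by omega
    rw [← this, hxr]
  have tins : ∀ k ∈ K, ∀ i, insert (x i (k i)) (t k) = t (up k i) := by
    intro k hk i
    obtain ⟨h1, h2⟩ := hx i (k i) ((memK k).1 hk i).2
    ext v
    rw [Finset.mem_insert, memt, memt]
    simp only [up, Function.update_apply]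
    constructor
    · rintro (rfl | h)
      · rw [if_pos h1, h2]; omega
      · split_ifs with h3
        · rw [h3] at h; omega
        · exact h
    · intro h
      split_ifs at h with h3
      · by_cases h4 : r v = k i
        · left; rw [← h4, ← h3, hxr]
        · right; rw [h3]; omega
      · right; exact h
  have Aer : ∀ k ∈ K, ∀ i, (A k).erase (x i (k i)) = A (dn k i) := by
    intro k hk i
    have hki := ((memK k).1 hk i)
    obtain ⟨h1, h2⟩ := hx i (k i) hki.2
    ext v
    rw [Finset.mem_erase, memA, memA]
    simp only [dn, Function.update_apply]
    constructor
    · rintro ⟨h3, h4⟩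
      split_ifs with h5
      · have : r v ≠ k i := fun h6 => h3 (by rw [← h6, ← h5, hxr])
        rw [h5] at h4; omega
      · exact h4
    · intro h
      split_ifs at h with h3
      · refine ⟨?_, by rw [h3]; omega⟩
        rintro rfl
        rw [h2] at h; omega
      · refine ⟨?_, h⟩
        rintro rfl
        exact h3 h1
  have cardA : ∀ k i, k i < m i → (pt c (A k) i).card = k i + 1 := by
    intro k i hki
    have : pt c (A k) i = (Finset.range (k i + 1)).image (x i) := by
      ext v
      rw [mem_pt, memA, Finset.mem_image]
      constructor
      · rintro ⟨h1, h2⟩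
        refine ⟨r v, ?_, by rw [← h2, hxr]⟩
        rw [h2] at h1; simp; omega
      · rintro ⟨j, hj, rfl⟩
        rw [Finset.mem_range] at hj
        obtain ⟨h1, h2⟩ := hx i j (by omega)
        rw [h1, h2]; exact ⟨by omega, rfl⟩
    rw [this, Finset.card_image_of_injOn, Finset.card_range]
    intro a ha b hb hab
    simp only [Finset.coe_range, Set.mem_Iio] at ha hb
    rw [← (hx i a (by omega)).2, ← (hx i b (by omega)).2, hab]
  -- sums over the gap
  have gap : ∀ k ∈ K, ∀ S : Finset U, ∀ f : U → F, (∀ v ∈ S, ¬ (v ∈ A k ∧ v ∉ t k) → f v = 0) →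
      (∀ i, x i (k i) ∈ S) → ∑ v ∈ S, f v = ∑ i, f (x i (k i)) := by
    intro k hk S f hf hS
    have inj : Function.Injective (fun i => x i (k i)) := by
      intro i j hij
      have h1 := (hx i (k i) ((memK k).1 hk i).2).1
      have h2 := (hx j (k j) ((memK k).1 hk j).2).1
      simp only at hij
      rw [← h1, ← h2, hij]
    rw [← Finset.sum_image (f := f) (s := univ) (g := fun i => x i (k i)) (fun a _ b _ h => inj h)]
    symm
    refine Finset.sum_subset ?_ ?_
    · intro v hv
      obtain ⟨i, _, rfl⟩ := Finset.mem_image.1 hv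
      exact hS i
    · intro v hv hv2
      refine hf v hv fun h => hv2 ?_
      exact Finset.mem_image.2 ⟨c v, Finset.mem_univ _, (xuniq k hk v h.1 h.2).symm⟩
  have hlen : l.length - 1 = d := by simp [hl]
  have hsp := fun i => Qo_split (F := F) c i l (List.mem_finRange i)
  choose η hη1 hη2 using hsp
  let M := fun i => Qo F c (l.erase i)
  have Msupp : ∀ i B s, M i (dl F B) s ≠ 0 → s ⊆ B ∧ pt c s i = pt c B i := by
    intro i B s h
    obtain ⟨h1, h2⟩ := Qo_supp c _ _ _ h
    refine ⟨h1, ?_⟩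
    have h3 := h2 i
    rw [List.count_eq_zero_of_not_mem (fun h => (List.Nodup.mem_erase_iff (List.nodup_finRange _)).1 h |>.1 rfl)] at h3
    exact Finset.eq_of_subset_of_card_le (Finset.filter_subset_filter _ h1) (by omega)
  let χ : (Fin (d+1) → ℕ) → F := fun k => Q (dl F (A k)) (t k)
  have chi1 : ∀ k ∈ K, ∀ i, χ k = η i * (sg F (x i (k i)) (t k) * M i (dl F (A k)) (t (up k i))) := by
    intro k hk i
    have h1 := (hx i (k i) ((memK k).1 hk i).2).1
    change Q (dl F (A k)) (t k) = _
    rw [hQ, hη1 i, LinearMap.smul_apply, Pi.smul_apply, smul_eq_mul, Module.End.mul_apply, bd_apply,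
      Finset.sum_eq_single (x i (k i)), if_neg (xnt k hk i), tins k hk i]
    · intro v hv hne
      rw [mem_pt] at hv
      split_ifs with hvt
      · rfl
      · by_contra h
        have h := (Msupp i _ _ (right_ne_zero_of_mul h)).1 (Finset.mem_insert_self _ _)
        have := xuniq k hk v h hvt
        rw [hv.2] at this
        exact hne this
    · intro h; exact absurd ((mem_pt c _ _ _).2 ⟨Finset.mem_univ _, h1⟩) h
  have chi2 : ∀ k ∈ K, ∀ i, χ k = η i * ε * (sg F (x i (k i)) (A k) * M i (dl F (A (dn k i))) (t k)) := by
    intro k hk i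
    have h1 := (hx i (k i) ((memK k).1 hk i).2).1
    change Q (dl F (A k)) (t k) = _
    rw [hQ, hη2 i, LinearMap.smul_apply, Pi.smul_apply, smul_eq_mul, Module.End.mul_apply, bd_dl,
      map_sum, Finset.sum_apply, hlen, Finset.sum_eq_single (x i (k i)), Aer k hk i, map_smul]
    · rfl
    · intro v hv hne
      rw [Finset.mem_inter, mem_pt] at hv
      rw [map_smul, Pi.smul_apply, smul_eq_mul]
      by_contra h
      obtain ⟨h2, h3⟩ := Msupp i _ _ (right_ne_zero_of_mul h)
      have hvt : v ∉ t k := fun h => by simpa using h2 h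
      have := xuniq k hk v hv.2 hvt
      rw [hv.1.2] at this
      exact hne this
    · intro h
      exact absurd (Finset.mem_inter.2 ⟨(mem_pt c _ _ _).2 ⟨Finset.mem_univ _, h1⟩, xA k hk i⟩) h
  let G : Fin (d+1) → (Fin (d+1) → ℕ) → F := fun i k =>
    η i * (M i (dl F (A k)) (t (up k i)) * w (A k) (t (up k i)))
  have updn : ∀ k ∈ K, ∀ i, up (dn k i) i = k := by
    intro k hk i
    have := ((memK k).1 hk i).1
    ext j
    simp only [up, dn, Function.update_apply]
    split_ifs with h
    · subst h; omega
    · rfl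
  have E : ∀ k ∈ K, ∑ i, (G i k - G i (dn k i)) = χ k * Q (To F c (dl F (A k))) (t k) := by
    intro k hk
    have h := congrFun (hw (A k)).2.2 (t k)
    have hL : bd F univ (w (A k)) (t k) =
        ∑ i, sg F (x i (k i)) (t k) * w (A k) (t (up k i)) := by
      rw [bd_apply, gap k hk _ _ ?_ (fun i => Finset.mem_univ _)]
      · refine Finset.sum_congr rfl fun i _ => ?_
        rw [if_neg (xnt k hk i), tins k hk i]
      · intro v _ hv
        split_ifs with hvt
        · rfl
        · by_contra h'
          have := ((hw (A k)).2.1 _ (right_ne_zero_of_mul h')).2.1 (Finset.mem_insert_self _ _)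
          exact hv ⟨this, hvt⟩
    have hR : mkl w (bd F univ (dl F (A k))) (t k) =
        ∑ i, sg F (x i (k i)) (A k) * w (A (dn k i)) (t k) := by
      rw [bd_dl, map_sum, Finset.sum_apply, Finset.univ_inter, gap k hk _ _ ?_ (xA k hk)]
      · refine Finset.sum_congr rfl fun i _ => ?_
        rw [map_smul, mk_dl, Aer k hk i]; rfl
      · intro v hv hv2
        rw [map_smul, mk_dl, Pi.smul_apply, smul_eq_mul]
        by_contra h'
        have h3 := ((hw _).2.1 _ (right_ne_zero_of_mul h')).2.1
        refine hv2 ⟨hv, fun h => by simpa using h3 h⟩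
    rw [Pi.add_apply, Pi.smul_apply, smul_eq_mul, hL, hR] at h
    have h' : χ k * Q (To F c (dl F (A k))) (t k) =
        χ k * (∑ i, sg F (x i (k i)) (t k) * w (A k) (t (up k i))) -
          χ k * (ε * ∑ i, sg F (x i (k i)) (A k) * w (A (dn k i)) (t k)) := by
      rw [h]; ring
    rw [h', Finset.mul_sum, Finset.mul_sum, Finset.mul_sum, ← Finset.sum_sub_distrib]
    refine Finset.sum_congr rfl fun i _ => ?_
    congr 1
    · rw [chi1 k hk i]
      have := sg_sq (F := F) (x i (k i)) (t k)
      change η i * (M i (dl F (A k)) (t (up k i)) * w (A k) (t (up k i))) = _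
      linear_combination (-(η i * M i (dl F (A k)) (t (up k i)) * w (A k) (t (up k i)))) * this
    · rw [chi2 k hk i]
      have := sg_sq (F := F) (x i (k i)) (A k)
      change η i * (M i (dl F (A (dn k i))) (t (up (dn k i) i)) * w (A (dn k i)) (t (up (dn k i) i))) = _
      rw [updn k hk i]
      linear_combination (-(η i * M i (dl F (A (dn k i))) (t k) * w (A (dn k i)) (t k))) * (ε * ε * this + hεε)
  have G0 : ∀ k ∈ K, ∀ i, k i + 1 = m i → G i k = 0 := by
    intro k hk i hki
    have : w (A k) (t (up k i)) = 0 := by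
      by_contra h
      refine hN i (hX _ ((hw _).2.1 _ h).1 _ fun v hv => ?_)
      rw [mem_pt] at hv
      rw [memt, hv.2]
      simp only [up, Function.update_self]
      rw [hki, ← hv.2]; exact hr v
    simp [G, this]
  have G1 : ∀ k ∈ K, ∀ i, k i = 1 → G i (dn k i) = 0 := by
    intro k hk i hki
    have : w (A (dn k i)) = 0 := by
      refine (hw _).1 fun h => ?_
      have h1 := h i
      have h2 := cardA (dn k i) i (by simp [dn]; have := ((memK k).1 hk i).2; omega)
      simp [dn, hki] at h2
      have h3 : (pt c (A (dn k i)) i).card = 1 := by simpa [dn, hki] using h2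
      omega
    simp [G, this]
  have tel : ∀ i, ∑ k ∈ K, (G i k - G i (dn k i)) = 0 := by
    intro i
    rw [Finset.sum_sub_distrib, sub_eq_zero]
    have e1 : ∑ k ∈ K, G i k = ∑ k ∈ K with k i + 1 ≠ m i, G i k := by
      rw [Finset.sum_filter]
      refine Finset.sum_congr rfl fun k hk => ?_
      split_ifs with h
      · rfl
      · exact G0 k hk i (not_not.1 h)
    have e2 : ∑ k ∈ K, G i (dn k i) = ∑ k ∈ K with k i ≠ 1, G i (dn k i) := by
      rw [Finset.sum_filter]
      refine Finset.sum_congr rfl fun k hk => ?_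
      split_ifs with h
      · rfl
      · exact G1 k hk i (not_not.1 h)
    rw [e1, e2]
    refine Finset.sum_bij' (fun k _ => up k i) (fun k _ => dn k i) ?_ ?_ ?_ ?_ ?_
    · intro k hk
      rw [Finset.mem_filter, memK] at hk ⊢
      refine ⟨fun j => ?_, ?_⟩
      · simp only [up, Function.update_apply]
        have := hk.1 i
        split_ifs with h
        · subst h; omega
        · exact hk.1 j
      · simp [up]; have := hk.1 i; omega
    · intro k hk
      rw [Finset.mem_filter, memK] at hk ⊢
      refine ⟨fun j => ?_, ?_⟩
      · simp only [dn, Function.update_apply]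
        have := hk.1 i
        split_ifs with h
        · subst h; omega
        · exact hk.1 j
      · simp [dn]; have := hk.1 i; omega
    · intro k hk
      ext j
      simp only [up, dn, Function.update_apply]
      split_ifs with h
      · subst h; simp
      · rfl
    · intro k hk
      exact updn k (Finset.mem_filter.1 hk).1 i
    · intro k hk
      congr 1
      ext j
      simp only [up, dn, Function.update_apply]
      split_ifs with h
      · subst h; simp
      · rfl
  have total : ∑ k ∈ K, χ k * Q (To F c (dl F (A k))) (t k) = 0 := by
    rw [← Finset.sum_congr rfl E, Finset.sum_comm]
    exact Finset.sum_eq_zero fun i _ => tel i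
  have h1K : (fun _ => 1 : Fin (d+1) → ℕ) ∈ K := (memK _).2 fun i => ⟨le_rfl, by have := hm i; simp only [hmdef]; omega⟩
  rw [Finset.sum_eq_single (fun _ => 1) ?_ (fun h => absurd h1K h)] at total
  · rw [To_dl] at total
    · have hne : χ (fun _ => 1) ≠ 0 := by
        have := Qo_ne (F := F) c (fun i => x i 1)
          (fun i => (hx i 1 ((memK _).1 h1K i).2).1) l (List.nodup_finRange _) (t fun _ => 1)
          (fun i _ => xnt _ h1K i)
        have e : (t fun _ => 1) ∪ l.toFinset.image (fun i => x i 1) = A fun _ => 1 := by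
          ext v
          rw [Finset.mem_union, Finset.mem_image]
          constructor
          · rintro (h | ⟨i, _, rfl⟩)
            · exact (memA (fun _ => 1) v).2 ((memt (fun _ => 1) v).1 h).le
            · exact xA _ h1K i
          · intro h
            by_cases hv : v ∈ t fun _ => 1
            · exact Or.inl hv
            · exact Or.inr ⟨c v, by simp [hl], (xuniq _ h1K v h hv).symm⟩
        rw [e] at this
        exact this
      exact mul_ne_zero hne hne total
    · intro i
      exact cardA (fun _ => 1) i ((memK _).1 h1K i).2
  · intro k hk hk1
    rw [To_dl_not, map_zero]
    · simp
    · intro h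
      apply hk1
      ext i
      have := h i
      rw [cardA k i ((memK k).1 hk i).2] at this
      omega

end Helpers

/-- **The Topological Colorful Helly Theorem** (Kalai–Meshulam).
Let `V = P 0 ∪ ⋯ ∪ P d` be a partition of the finite vertex set `V` and let `X` be a
`d`-Leray complex over the field `F` on `V` containing the join `P 0 * ⋯ * P d` (i.e.
every set meeting each part in at most one vertex is a simplex of `X`).  Then some part
`P i` is a simplex of `X`. -/
theorem topological_colorful_helly_partition
    {V : Type} [Fintype V] [LinearOrder V] (F : Type) [Field F]
    (d : ℕ) (X : Set (Finset V)) (hX : IsComplex X)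
    (hLeray : IsLeray F d X)
    (P : Fin (d + 1) → Finset V)
    (hdisj : ∀ i j, i ≠ j → Disjoint (P i) (P j))
    (hcover : ∀ v : V, ∃ i, v ∈ P i)
    (hjoin : ∀ σ : Finset V, (∀ i, (σ ∩ P i).card ≤ 1) → σ ∈ X) :
    ∃ i, P i ∈ X := by
  choose c hc using hcover
  have key : ∀ (s : Finset V) (i : Fin (d + 1)), pt c s i = s ∩ P i := by
    intro s i
    ext v
    rw [mem_pt, Finset.mem_inter]
    refine and_congr_right fun _ => ⟨fun h => h ▸ hc v, fun h => ?_⟩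
    by_contra hne
    exact Finset.disjoint_left.1 (hdisj _ _ hne) (hc v) h
  by_contra hno
  push Not at hno
  refine final (F := F) c hX hLeray (fun s hs => hjoin s fun i => ?_) (fun i => ?_)
  · rw [← key]; exact hs i
  · rw [key, Finset.univ_inter]; exact hno i
end

section
/- Let X and Y be simplicial complexes on the same finite vertex set V, and let M be a matroid on V (identified with the complex of its independent sets) such that Y^∨ ⊆ M ⊆ X, where Y^∨ = {A ⊆ V : V \ A ∉ Y} is the Alexander dual of Y. Then there exists a simplex σ ∈ X such that ρ_M(V \ σ) ≤ L_Y(X;F). -/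
open Finset

variable {V : Type*}

/-- The rank `ρ_M(S)` of a set `S` in a matroid `M`: the maximal cardinality of an
independent subset of `S`. -/
noncomputable def matroidRank {V : Type*} (M : Matroid V) (S : Set V) : ℕ :=
  sSup {n | ∃ I : Finset V, ↑I ⊆ S ∧ M.Indep ↑I ∧ I.card = n}

/-- The matroid `M`, identified with the simplicial complex of its independent sets. -/
def indepComplex {V : Type*} (M : Matroid V) : Set (Finset V) :=
  {σ | M.Indep ↑σ}

/-- The relative Leray number `L_Y(X; F)`: the least `d` such that
`h̃_i(X[V \ σ]; F) = 0` for all `i ≥ d` and all `σ ∈ Y`. -/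
noncomputable def relLeray {V : Type*} [Fintype V] [LinearOrder V] (F : Type) [Field F]
    (X Y : Set (Finset V)) : ℕ :=
  sInf {d | ∀ σ ∈ Y, ∀ i : ℕ, d ≤ i → Subsingleton (RH F (induce X σᶜ) (i + 1))}

set_option linter.unusedSectionVars false

namespace RTH

section Ops

variable {W : Type} [Fintype W] [LinearOrder W] {F : Type} [Field F]

/-- The sign of inserting `v` into `ρ`. -/
def sgn (F : Type) [Field F] (v : W) (ρ : Finset W) : F := ∏ u ∈ ρ, if u < v then (-1 : F) else 1

lemma sgn_sq (v : W) (ρ : Finset W) : sgn F v ρ * sgn F v ρ = 1 := by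
  unfold sgn
  rw [← Finset.prod_mul_distrib]
  apply Finset.prod_eq_one
  intro u _
  split_ifs <;> simp

lemma sgn_insert {v w : W} {ρ : Finset W} (h : w ∉ ρ) :
    sgn F v (insert w ρ) = (if w < v then (-1 : F) else 1) * sgn F v ρ := by
  unfold sgn
  rw [Finset.prod_insert h]

lemma sgn_erase_self (v : W) (ρ : Finset W) : sgn F v (ρ.erase v) = sgn F v ρ := by
  by_cases h : v ∈ ρ
  · conv_rhs => rw [← Finset.insert_erase h]
    rw [sgn_insert (Finset.notMem_erase v ρ)]
    simp
  · rw [Finset.erase_eq_of_notMem h]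

/-- For `v ≠ w` not in `ρ` the signs of inserting in both orders are opposite. -/
lemma sgn_swap {v w : W} {ρ : Finset W} (hvw : v ≠ w) (hv : v ∉ ρ) (hw : w ∉ ρ) :
    sgn F v ρ * sgn F w (insert v ρ) = - (sgn F w ρ * sgn F v (insert w ρ)) := by
  rw [sgn_insert hv, sgn_insert hw]
  rcases lt_or_gt_of_ne hvw with h | h
  · rw [if_pos h, if_neg (not_lt.2 h.le)]; ring
  · rw [if_pos h, if_neg (not_lt.2 h.le)]; ring

/-- contraction -/
def io (v : W) (c : Finset W → F) : Finset W → F :=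
  fun ρ => if v ∈ ρ then 0 else sgn F v ρ * c (insert v ρ)

/-- wedge -/
def we (v : W) (c : Finset W → F) : Finset W → F :=
  fun ρ => if v ∈ ρ then sgn F v ρ * c (ρ.erase v) else 0

/-- boundary -/
def bd (c : Finset W → F) : Finset W → F :=
  fun ρ => ∑ v, io v c ρ

lemma bd_add (a b : Finset W → F) : bd (a + b) = bd a + bd b := by
  funext ρ
  simp only [bd, Pi.add_apply, ← Finset.sum_add_distrib]
  refine Finset.sum_congr rfl fun v _ => ?_
  simp only [io, Pi.add_apply]
  split_ifs <;> ring

lemma bd_smul (r : F) (a : Finset W → F) : bd (r • a) = r • bd a := by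
  funext ρ
  simp only [bd, Pi.smul_apply, smul_eq_mul, Finset.mul_sum]
  refine Finset.sum_congr rfl fun v _ => ?_
  simp only [io, Pi.smul_apply, smul_eq_mul]
  split_ifs <;> ring

/-- boundary as a linear map -/
def bdL : (Finset W → F) →ₗ[F] (Finset W → F) where
  toFun := bd
  map_add' := bd_add
  map_smul' := bd_smul

lemma bdL_apply (c : Finset W → F) : bdL c = bd c := rfl

lemma io_io (v w : W) (c : Finset W → F) (ρ : Finset W) :
    io v (io w c) ρ = - io w (io v c) ρ := by
  simp only [io, Finset.mem_insert]
  by_cases hv : v ∈ ρ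
  · simp [hv]
  by_cases hw : w ∈ ρ
  · simp [hw]
  by_cases hvw : v = w
  · subst hvw; simp
  have hwv : w ≠ v := fun h => hvw h.symm
  simp only [hv, hw, hvw, hwv, or_self, if_false]
  rw [Finset.insert_comm w v, ← mul_assoc, ← mul_assoc, sgn_swap hvw hv hw]
  ring

lemma io_io_self (v : W) (c : Finset W → F) (ρ : Finset W) :
    io v (io v c) ρ = 0 := by
  simp [io]

lemma antisym_sum {A : Type*} [AddCommGroup A] (T : Finset W) (a : W → W → A)
    (h0 : ∀ v, a v v = 0) (h : ∀ v ∈ T, ∀ w ∈ T, v ≠ w → a v w = - a w v) :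
    ∑ v ∈ T, ∑ w ∈ T, a v w = 0 := by
  rw [← Finset.sum_product']
  refine Finset.sum_involution (fun p _ => (p.2, p.1)) ?_ ?_ ?_ ?_
  · rintro ⟨v, w⟩ hp
    rw [Finset.mem_product] at hp
    by_cases hvw : v = w
    · subst hvw; simp [h0]
    · simp [h v hp.1 w hp.2 hvw]
  · rintro ⟨v, w⟩ _ hne heq
    simp only [Prod.mk.injEq] at heq
    apply hne
    simp [heq.1, h0]
  · rintro ⟨v, w⟩ hp
    simpa [and_comm] using hp
  · rintro ⟨v, w⟩ _
    rfl

lemma io_sum {ι : Type*} (s : Finset ι) (f : ι → Finset W → F) (v : W) (ρ : Finset W) :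
    io v (fun σ => ∑ i ∈ s, f i σ) ρ = ∑ i ∈ s, io v (f i) ρ := by
  simp only [io]
  split_ifs
  · simp
  · rw [Finset.mul_sum]

lemma bd_bd (c : Finset W → F) : bd (bd c) = 0 := by
  funext ρ
  have : bd (bd c) ρ = ∑ v, ∑ w, io v (io w c) ρ := by
    simp only [bd]
    refine Finset.sum_congr rfl fun v _ => io_sum _ _ _ _
  rw [this]
  exact antisym_sum _ _ (fun v => io_io_self v c ρ) (fun v _ w _ _ => io_io v w c ρ)

lemma bd_io (e : W) (c : Finset W → F) : bd (io e c) = - io e (bd c) := by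
  funext ρ
  have : io e (bd c) ρ = ∑ w, io e (io w c) ρ := io_sum _ _ _ _
  rw [Pi.neg_apply, this]
  simp only [bd]
  rw [← Finset.sum_neg_distrib]
  exact Finset.sum_congr rfl fun v _ => io_io v e c ρ

lemma io_we_self (e : W) (c : Finset W → F) (ρ : Finset W) :
    io e (we e c) ρ + we e (io e c) ρ = c ρ := by
  by_cases h : e ∈ ρ
  · simp only [io, we, h, if_true, Finset.notMem_erase, if_false, Finset.insert_erase h,
      sgn_erase_self, ← mul_assoc, sgn_sq]
    ring
  · simp only [io, we, h, if_false, Finset.mem_insert_self, if_true, Finset.erase_insert h,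
      ← mul_assoc]
    rw [← sgn_erase_self e (insert e ρ), Finset.erase_insert h, sgn_sq]
    ring

lemma io_we_ne {v e : W} (hve : v ≠ e) (c : Finset W → F) (ρ : Finset W) :
    io v (we e c) ρ + we e (io v c) ρ = 0 := by
  by_cases hv : v ∈ ρ
  · have : v ∈ ρ.erase e := Finset.mem_erase.2 ⟨hve, hv⟩
    simp [io, we, hv, this]
  have hv' : v ∉ ρ.erase e := fun h => hv (Finset.mem_of_mem_erase h)
  by_cases h : e ∈ ρ
  · have hev : e ∈ insert v ρ := Finset.mem_insert_of_mem h
    simp only [io, we, hv, hv', h, hev, if_true, if_false]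
    have h1 : (insert v ρ).erase e = insert v (ρ.erase e) := Finset.erase_insert_of_ne hve
    rw [h1]
    obtain ⟨ρ', he', rfl⟩ : ∃ ρ', e ∉ ρ' ∧ ρ = insert e ρ' :=
      ⟨ρ.erase e, Finset.notMem_erase _ _, (Finset.insert_erase h).symm⟩
    rw [Finset.erase_insert he'] at hv' ⊢
    rw [Finset.insert_comm v e, ← sgn_erase_self e (insert e (insert v ρ')),
      ← sgn_erase_self e (insert e ρ'), Finset.erase_insert he',
      Finset.erase_insert (by simp [hve.symm, he']), ← mul_assoc, ← mul_assoc,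
      sgn_insert he', sgn_insert hv']
    rcases lt_or_gt_of_ne hve with h | h
    · rw [if_pos h, if_neg (not_lt.2 h.le)]; ring
    · rw [if_pos h, if_neg (not_lt.2 h.le)]; ring
  · have hev : e ∉ insert v ρ := by simp [hve.symm, h]
    simp only [io, we, hv, hev, h, if_false]
    ring

lemma we_sum {ι : Type*} (s : Finset ι) (f : ι → Finset W → F) (v : W) (ρ : Finset W) :
    we v (fun σ => ∑ i ∈ s, f i σ) ρ = ∑ i ∈ s, we v (f i) ρ := by
  simp only [we]
  split_ifs
  · rw [Finset.mul_sum]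
  · simp

lemma bd_we (e : W) (c : Finset W → F) : bd (we e c) = c - we e (bd c) := by
  funext ρ
  have : we e (bd c) ρ = ∑ w, we e (io w c) ρ := we_sum _ _ _ _
  rw [Pi.sub_apply, this, eq_sub_iff_add_eq]
  simp only [bd]
  rw [← Finset.sum_add_distrib, Finset.sum_eq_single e]
  · exact io_we_self e c ρ
  · intro v _ hv
    exact io_we_ne hv c ρ
  · simp

lemma we_zero (e : W) : we e (0 : Finset W → F) = 0 := by
  funext ρ; simp [we]

lemma io_zero (e : W) : io e (0 : Finset W → F) = 0 := by
  funext ρ; simp [io]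

/-- Cones fill cycles. -/
lemma bd_we_of_cycle (e : W) (c : Finset W → F) (hc : bd c = 0) : bd (we e c) = c := by
  rw [bd_we, hc, we_zero, sub_zero]

/-- Homology of the matroid complex vanishes below the rank. -/
lemma matroid_fill (Ind : Finset W → Prop)
    (hsub : ∀ A B, A ⊆ B → Ind B → Ind A)
    (haug : ∀ A B, Ind A → Ind B → A.card < B.card → ∃ x ∈ B, x ∉ A ∧ Ind (insert x A)) :
    ∀ (n : ℕ) (S : Finset W), S.card = n → ∀ (I : Finset W) (k : ℕ), Disjoint I S →
      (∃ J ⊆ S, Ind (J ∪ I) ∧ k < J.card) → ∀ z : Finset W → F,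
      (∀ ρ, z ρ ≠ 0 → ρ ⊆ S ∧ Ind (ρ ∪ I) ∧ ρ.card = k) → bd z = 0 →
      ∃ w : Finset W → F, (∀ ρ, w ρ ≠ 0 → ρ ⊆ S ∧ Ind (ρ ∪ I) ∧ ρ.card = k + 1) ∧ bd w = z := by
  intro n
  induction n with
  | zero =>
    rintro S hS I k - ⟨J, hJ, -, hk⟩
    have := Finset.card_le_card hJ
    omega
  | succ n ih =>
    rintro S hS I k hIS ⟨J, hJS, hJ, hk⟩ z hz hbz
    obtain ⟨e, he⟩ : S.Nonempty := Finset.card_pos.1 (by omega)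
    have hScard : (S.erase e).card = n := by rw [Finset.card_erase_of_mem he]; omega
    have heI : e ∉ I := fun h => Finset.disjoint_left.1 hIS h he
    have hIS' : Disjoint I (S.erase e) := hIS.mono_right (Finset.erase_subset _ _)
    by_cases hJ' : ∃ J' ⊆ S.erase e, Ind (J' ∪ I) ∧ k < J'.card
    · by_cases hl : Ind (insert e I)
      · -- main case
        obtain _ | k := k
        · -- degree zero
          obtain ⟨w, hw, hbw⟩ := ih (S.erase e) hScard I 0 hIS' hJ' z (by
            intro ρ hρ
            obtain ⟨h1, h2, h3⟩ := hz ρ hρ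
            rw [Finset.card_eq_zero] at h3
            subst h3
            exact ⟨by simp, h2, rfl⟩) hbz
          exact ⟨w, fun ρ hρ => ⟨(hw ρ hρ).1.trans (Finset.erase_subset _ _), (hw ρ hρ).2⟩, hbw⟩
        have hIe : Disjoint (insert e I) (S.erase e) := by
          rw [Finset.disjoint_insert_left]
          exact ⟨Finset.notMem_erase _ _, hIS'⟩
        have hJI : Disjoint J I := (hIS.mono_right hJS).symm
        have hext : ∀ j ≤ k + 1, ∃ K ⊆ S.erase e, Ind (K ∪ insert e I) ∧ K.card = j := by
          intro j
          induction j with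
          | zero => intro _; exact ⟨∅, by simp, by simpa using hl, rfl⟩
          | succ j ihj =>
            intro hj
            obtain ⟨K, hKS, hK, hKc⟩ := ihj (by omega)
            have hKI : Disjoint K (insert e I) := (hIe.mono_right hKS).symm
            obtain ⟨x, hx, hxK, hx'⟩ := haug _ _ hK hJ (by
              rw [Finset.card_union_of_disjoint hKI, Finset.card_union_of_disjoint hJI,
                Finset.card_insert_of_notMem heI]
              omega)
            simp only [Finset.mem_union, Finset.mem_insert, not_or] at hxK
            have hxJ : x ∈ J := by
              rcases Finset.mem_union.1 hx with h | h
              · exact h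
              · exact absurd h hxK.2.2
            refine ⟨insert x K, ?_, ?_, ?_⟩
            · apply Finset.insert_subset _ hKS
              exact Finset.mem_erase.2 ⟨hxK.2.1, hJS hxJ⟩
            · rwa [Finset.insert_union]
            · rw [Finset.card_insert_of_notMem hxK.1, hKc]
        obtain ⟨K, hKS, hK, hKc⟩ := hext (k + 1) le_rfl
        obtain ⟨b, hb, hbb⟩ := ih (S.erase e) hScard (insert e I) k hIe
          ⟨K, hKS, hK, by omega⟩ (io e z) (by
            intro ρ hρ
            have heρ : e ∉ ρ := fun h => hρ (by simp [io, h])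
            have h0 : z (insert e ρ) ≠ 0 := fun h => hρ (by simp [io, h])
            obtain ⟨h1, h2, h3⟩ := hz _ h0
            refine ⟨?_, ?_, ?_⟩
            · intro x hx
              exact Finset.mem_erase.2 ⟨fun h => heρ (h ▸ hx), h1 (Finset.mem_insert_of_mem hx)⟩
            · rw [Finset.union_insert, ← Finset.insert_union]; exact h2
            · rw [Finset.card_insert_of_notMem heρ] at h3; omega) (by
            rw [bd_io, hbz, io_zero, neg_zero])
        have hbe : bd (we e b) = b - we e (io e z) := by rw [bd_we, hbb]
        obtain ⟨w, hw, hbw⟩ := ih (S.erase e) hScard I (k + 1) hIS' hJ' (z + bd (we e b)) (by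
            intro ρ hρ
            rw [hbe] at hρ
            simp only [Pi.add_apply, Pi.sub_apply] at hρ
            by_cases hbρ : b ρ = 0
            · by_cases heρ : e ∈ ρ
              · exfalso
                apply hρ
                have : we e (io e z) ρ = z ρ := by
                  simp only [we, io, heρ, if_true, Finset.notMem_erase, if_false,
                    Finset.insert_erase heρ, sgn_erase_self, ← mul_assoc, sgn_sq, one_mul]
                rw [this, hbρ]; ring
              · have h0 : z ρ ≠ 0 := by
                  intro h
                  apply hρ
                  rw [h, hbρ]
                  simp [we, heρ]
                obtain ⟨h1, h2, h3⟩ := hz _ h0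
                exact ⟨fun x hx => Finset.mem_erase.2 ⟨fun h => heρ (h ▸ hx), h1 hx⟩, h2, h3⟩
            · obtain ⟨h1, h2, h3⟩ := hb _ hbρ
              exact ⟨h1, hsub _ _ (Finset.union_subset_union_right (Finset.subset_insert _ _)) h2,
                h3⟩) (by rw [bd_add, bd_bd, hbz, add_zero])
        refine ⟨w - we e b, ?_, ?_⟩
        · intro ρ hρ
          by_cases hwρ : w ρ = 0
          · have h0 : we e b ρ ≠ 0 := fun h => hρ (by simp [hwρ, h])
            have heρ : e ∈ ρ := by
              by_contra h
              exact h0 (by simp [we, h])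
            have h0' : b (ρ.erase e) ≠ 0 := fun h => h0 (by simp [we, h])
            obtain ⟨h1, h2, h3⟩ := hb _ h0'
            refine ⟨?_, ?_, ?_⟩
            · intro x hx
              by_cases hxe : x = e
              · exact hxe ▸ he
              · exact Finset.mem_of_mem_erase (h1 (Finset.mem_erase.2 ⟨hxe, hx⟩))
            · rwa [Finset.union_insert, ← Finset.insert_union, Finset.insert_erase heρ] at h2
            · rw [Finset.card_erase_of_mem heρ] at h3
              omega
          · exact ⟨(hw ρ hwρ).1.trans (Finset.erase_subset _ _), (hw ρ hwρ).2⟩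
        · rw [← bdL_apply, map_sub, bdL_apply, bdL_apply, hbw]; abel
      · -- e is a loop
        obtain ⟨w, hw, hbw⟩ := ih (S.erase e) hScard I k hIS' hJ' z (by
            intro ρ hρ
            obtain ⟨h1, h2, h3⟩ := hz ρ hρ
            refine ⟨fun x hx => Finset.mem_erase.2 ⟨?_, h1 hx⟩, h2, h3⟩
            rintro rfl
            apply hl
            apply hsub _ _ _ h2
            intro y hy
            rcases Finset.mem_insert.1 hy with rfl | hy
            · exact Finset.mem_union_left _ hx
            · exact Finset.mem_union_right _ hy) hbz
        exact ⟨w, fun ρ hρ => ⟨(hw ρ hρ).1.trans (Finset.erase_subset _ _), (hw ρ hρ).2⟩, hbw⟩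
    · -- e is a coloop
      refine ⟨we e z, ?_, bd_we_of_cycle e z hbz⟩
      intro ρ hρ
      have heρ : e ∈ ρ := by
        by_contra h
        exact hρ (by simp [we, h])
      have h0 : z (ρ.erase e) ≠ 0 := fun h => hρ (by simp [we, h])
      obtain ⟨h1, h2, h3⟩ := hz _ h0
      have hρS : ρ ⊆ S := by
        intro x hx
        by_cases hxe : x = e
        · exact hxe ▸ he
        · exact h1 (Finset.mem_erase.2 ⟨hxe, hx⟩)
      have hJI : Disjoint J I := (hIS.mono_right hJS).symm
      have hρI : Disjoint (ρ.erase e) I := (hIS.mono_right h1).symm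
      obtain ⟨x, hx, hxK, hx'⟩ := haug _ _ h2 hJ (by
        rw [Finset.card_union_of_disjoint hρI, Finset.card_union_of_disjoint hJI]; omega)
      simp only [Finset.mem_union, not_or] at hxK
      have hxJ : x ∈ J := by
        rcases Finset.mem_union.1 hx with h | h
        · exact h
        · exact absurd h hxK.2
      have hxe : x = e := by
        by_contra hxe
        apply hJ'
        refine ⟨insert x (ρ.erase e), ?_, ?_, ?_⟩
        · apply Finset.insert_subset
          · exact Finset.mem_erase.2 ⟨hxe, hJS hxJ⟩
          · exact Finset.erase_subset_erase _ hρS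
        · rwa [Finset.insert_union]
        · rw [Finset.card_insert_of_notMem hxK.1]; omega
      subst hxe
      refine ⟨hρS, ?_, ?_⟩
      · rwa [← Finset.insert_union, Finset.insert_erase heρ] at hx'
      · rw [Finset.card_erase_of_mem heρ] at h3
        have := Finset.card_pos.2 ⟨_, heρ⟩
        omega

/-- Chains supported on `P`. -/
def supp (F : Type) [Field F] (P : Set (Finset W)) : Submodule F (Finset W → F) where
  carrier := {c | ∀ ρ, c ρ ≠ 0 → ρ ∈ P}
  add_mem' := by
    intro a b ha hb ρ hρ
    by_cases h : a ρ = 0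
    · exact hb ρ (fun h' => hρ (by simp [h, h']))
    · exact ha ρ h
  zero_mem' := by
    intro ρ hρ
    simp at hρ
  smul_mem' := by
    intro r a ha ρ hρ
    exact ha ρ (fun h' => hρ (by simp [h']))

lemma mem_supp {P : Set (Finset W)} {c : Finset W → F} :
    c ∈ supp F P ↔ ∀ ρ, c ρ ≠ 0 → ρ ∈ P := Iff.rfl

/-- The right hand side of the cubical boundary equation. -/
def cubeR (g : Finset W → Finset W → Finset W → F) (α T : Finset W) : Finset W → F :=
  if T = ∅ then Pi.single ∅ 1 else
    ∑ v ∈ T, sgn F v T • (g (insert v α) (T.erase v) - g α (T.erase v))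

lemma bd_single_empty : bd (Pi.single ∅ 1 : Finset W → F) = 0 := by
  funext ρ
  simp only [bd]
  apply Finset.sum_eq_zero
  intro v _
  simp [io]

lemma bd_cubeR (g : Finset W → Finset W → Finset W → F) (α T : Finset W)
    (h1 : ∀ v ∈ T, bd (g α (T.erase v)) = cubeR g α (T.erase v))
    (h2 : ∀ v ∈ T, bd (g (insert v α) (T.erase v)) = cubeR g (insert v α) (T.erase v)) :
    bd (cubeR g α T) = 0 := by
  by_cases hT : T = ∅
  · rw [cubeR, if_pos hT, bd_single_empty]
  rw [cubeR, if_neg hT, ← bdL_apply, map_sum]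
  have step : ∀ v ∈ T, bdL (sgn F v T • (g (insert v α) (T.erase v) - g α (T.erase v)))
      = sgn F v T • (cubeR g (insert v α) (T.erase v) - cubeR g α (T.erase v)) := by
    intro v hv
    rw [map_smul, map_sub, bdL_apply, bdL_apply, h1 v hv, h2 v hv]
  rw [Finset.sum_congr rfl step]
  by_cases hc : ∃ v, T = {v}
  · obtain ⟨v, rfl⟩ := hc
    simp [cubeR]
  have hne : ∀ v ∈ T, T.erase v ≠ ∅ := by
    intro v hv h
    apply hc
    refine ⟨v, ?_⟩
    rw [← Finset.insert_erase hv, h]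
    rfl
  have step2 : ∀ v ∈ T, sgn F v T • (cubeR g (insert v α) (T.erase v) - cubeR g α (T.erase v))
      = ∑ w ∈ T, if w = v then 0 else (sgn F v T * sgn F w (T.erase v)) •
        ((g (insert w (insert v α)) ((T.erase v).erase w) - g (insert v α) ((T.erase v).erase w))
          - (g (insert w α) ((T.erase v).erase w) - g α ((T.erase v).erase w))) := by
    intro v hv
    rw [cubeR, cubeR, if_neg (hne v hv), if_neg (hne v hv), ← Finset.sum_sub_distrib,
      Finset.smul_sum, ← Finset.add_sum_erase T _ hv, if_pos rfl, zero_add]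
    refine Finset.sum_congr rfl fun w hw => ?_
    rw [if_neg (Finset.ne_of_mem_erase hw), ← smul_sub, smul_smul]
  rw [Finset.sum_congr rfl step2]
  apply antisym_sum
  · intro v; simp
  · intro v hv w hw hvw
    rw [if_neg (Ne.symm hvw), if_neg hvw, Finset.insert_comm w v, Finset.erase_right_comm]
    have hs : sgn F v T * sgn F w (T.erase v) = - (sgn F w T * sgn F v (T.erase w)) := by
      have e1 : insert w ((T.erase v).erase w) = T.erase v :=
        Finset.insert_erase (Finset.mem_erase.2 ⟨hvw.symm, hw⟩)
      have e2 : insert v ((T.erase v).erase w) = T.erase w := by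
        rw [Finset.erase_right_comm]
        exact Finset.insert_erase (Finset.mem_erase.2 ⟨hvw, hv⟩)
      have a1 : sgn F w (T.erase v) * sgn F v T = - (sgn F v (T.erase w) * sgn F w T) := by
        have t := sgn_swap (F := F) hvw (ρ := (T.erase v).erase w) (by simp) (by simp)
        rw [e1, e2, sgn_erase_self w (T.erase v), Finset.erase_right_comm,
          sgn_erase_self v (T.erase w), sgn_erase_self v T, sgn_erase_self w T] at t
        linear_combination t
      linear_combination a1
    rw [hs, neg_smul]
    congr 2
    abel

lemma cube_exists (X : Set (Finset W)) (hX : IsComplex X)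
    (Q : Finset W → ℕ → Submodule F (Finset W → F))
    (hmono : ∀ α β n, α ⊆ β → Q β n ≤ Q α n)
    (h0 : ∀ α, (Pi.single ∅ 1 : Finset W → F) ∈ Q α 0)
    (hfill : ∀ α ∈ X, ∀ n, ∀ z ∈ Q α n, bd z = 0 → ∃ w ∈ Q α (n + 1), bd w = z) :
    ∀ n : ℕ, ∃ g : Finset W → Finset W → Finset W → F, ∀ α T, T.card < n → Disjoint α T →
      α ∪ T ∈ X → g α T ∈ Q α (T.card + 1) ∧ bd (g α T) = cubeR g α T := by
  classical
  intro n
  induction n with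
  | zero => exact ⟨0, fun α T h => absurd h (Nat.not_lt_zero _)⟩
  | succ n ih =>
    obtain ⟨g, hg⟩ := ih
    have key : ∀ α T, T.card = n → Disjoint α T → α ∪ T ∈ X →
        ∃ w ∈ Q α (T.card + 1), bd w = cubeR g α T := by
      intro α T hTn hd hαT
      have a1 : ∀ v ∈ T, g α (T.erase v) ∈ Q α T.card ∧
          bd (g α (T.erase v)) = cubeR g α (T.erase v) := by
        intro v hv
        have hc := Finset.card_erase_add_one hv
        have := hg α (T.erase v) (by omega) (hd.mono_right (Finset.erase_subset _ _))
          (hX _ hαT _ (Finset.union_subset_union_right (Finset.erase_subset _ _)))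
        rwa [hc] at this
      have a2 : ∀ v ∈ T, g (insert v α) (T.erase v) ∈ Q α T.card ∧
          bd (g (insert v α) (T.erase v)) = cubeR g (insert v α) (T.erase v) := by
        intro v hv
        have hc := Finset.card_erase_add_one hv
        have := hg (insert v α) (T.erase v) (by omega) (by
            rw [Finset.disjoint_insert_left]
            exact ⟨Finset.notMem_erase _ _, hd.mono_right (Finset.erase_subset _ _)⟩)
          (by rwa [Finset.insert_union, ← Finset.union_insert, Finset.insert_erase hv])
        rw [hc] at this
        exact ⟨hmono _ _ _ (Finset.subset_insert _ _) this.1, this.2⟩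
      apply hfill α (hX _ hαT _ Finset.subset_union_left)
      · rw [cubeR]
        split_ifs with hT
        · rw [hT]; exact h0 α
        · exact Submodule.sum_mem _ fun v hv => Submodule.smul_mem _ _
            (Submodule.sub_mem _ (a2 v hv).1 (a1 v hv).1)
      · exact bd_cubeR g α T (fun v hv => (a1 v hv).2) (fun v hv => (a2 v hv).2)
    choose! w hw using key
    let g' : Finset W → Finset W → Finset W → F := fun α T => if T.card = n then w α T else g α T
    have hR : ∀ α T, T.card ≤ n → cubeR g' α T = cubeR g α T := by
      intro α T hT
      unfold cubeR
      split_ifs with h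
      · rfl
      · refine Finset.sum_congr rfl fun v hv => ?_
        have hc := Finset.card_erase_add_one hv
        have : (T.erase v).card ≠ n := by omega
        simp only [g', this, if_false]
    refine ⟨g', fun α T hT hd hαT => ?_⟩
    rw [hR α T (by omega)]
    by_cases h : T.card = n
    · simp only [g', h, if_true]
      have := hw α T h hd hαT
      rwa [h] at this
    · simp only [g', h, if_false]
      exact hg α T (by omega) hd hαT

/-- The trace argument. -/
lemma cube_contra (X : Set (Finset W)) (hX : IsComplex X) (hXe : ∅ ∈ X)
    (Q : Finset W → ℕ → Submodule F (Finset W → F))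
    (hQ : ∀ α n c, c ∈ Q α n → ∀ ρ, c ρ ≠ 0 → ρ ∈ X ∧ Disjoint α ρ)
    (hmono : ∀ α β n, α ⊆ β → Q β n ≤ Q α n)
    (h0 : ∀ α, (Pi.single ∅ 1 : Finset W → F) ∈ Q α 0)
    (hfill : ∀ α ∈ X, ∀ n, ∀ z ∈ Q α n, bd z = 0 → ∃ w ∈ Q α (n + 1), bd w = z) : False := by
  classical
  obtain ⟨g, hg⟩ := cube_exists X hX Q hmono h0 hfill (Fintype.card W + 1)
  have hg' : ∀ α T, Disjoint α T → α ∪ T ∈ X →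
      g α T ∈ Q α (T.card + 1) ∧ bd (g α T) = cubeR g α T :=
    fun α T => hg α T (Nat.lt_succ_of_le (Finset.card_le_univ T))
  let h : Finset W → Finset W → F := fun τ => if τ ∈ X then g ∅ τ else 0
  have hsupp : ∀ τ ρ, ρ ∉ X → h τ ρ = 0 := by
    intro τ ρ hρ
    simp only [h]
    split_ifs with hτ
    · by_contra hne
      exact hρ (hQ _ _ _ (hg' ∅ τ (by simp) (by simpa using hτ)).1 ρ hne).1
    · rfl
  let s : Finset W → F := fun τ => (-1) ^ τ.card
  -- pointwise identity
  have hpt : ∀ τ, bd (h τ) τ = (if τ = ∅ then 1 else 0)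
      - ∑ v ∈ τ, sgn F v τ * h (τ.erase v) τ := by
    intro τ
    by_cases hτ : τ ∈ X
    · have e1 : h τ = g ∅ τ := by simp only [h, hτ, if_true]
      rw [e1, (hg' ∅ τ (by simp) (by simpa using hτ)).2, cubeR]
      split_ifs with hτe
      · subst hτe; simp
      · rw [Finset.sum_apply, zero_sub, ← Finset.sum_neg_distrib]
        refine Finset.sum_congr rfl fun v hv => ?_
        have e2 : h (τ.erase v) = g ∅ (τ.erase v) := by
          simp only [h, hX τ hτ _ (Finset.erase_subset v τ), if_true]
        have e3 : g (insert v ∅) (τ.erase v) τ = 0 := by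
          by_contra hne
          have := (hQ _ _ _ (hg' (insert v ∅) (τ.erase v) (by simp) (by
            rwa [Finset.insert_union, Finset.empty_union, Finset.insert_erase hv])).1 τ hne).2
          simp [hv] at this
        rw [e2]
        simp only [Pi.smul_apply, Pi.sub_apply, e3, smul_eq_mul]
        ring
    · have e1 : h τ = 0 := by simp only [h, hτ, if_false]
      have hne : τ ≠ ∅ := fun h => hτ (h ▸ hXe)
      have : bd (0 : Finset W → F) = 0 := map_zero (bdL (W := W) (F := F))
      rw [e1, if_neg hne, this, Finset.sum_eq_zero]
      · simp
      · intro v _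
        rw [hsupp _ _ hτ, mul_zero]
  have hsum : ∑ τ, s τ * bd (h τ) τ = 1 - ∑ τ, s τ * ∑ v ∈ τ, sgn F v τ * h (τ.erase v) τ := by
    rw [Finset.sum_congr rfl (fun τ _ => by rw [hpt τ, mul_sub]), Finset.sum_sub_distrib]
    congr 1
    simp [s]
  have hflip : ∑ τ, s τ * bd (h τ) τ = - ∑ τ, s τ * ∑ v ∈ τ, sgn F v τ * h (τ.erase v) τ := by
    have l : ∑ τ, s τ * bd (h τ) τ =
        ∑ v, ∑ τ ∈ Finset.univ.filter (fun τ : Finset W => v ∉ τ),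
          s τ * (sgn F v τ * h τ (insert v τ)) := by
      simp only [bd, Finset.mul_sum]
      rw [Finset.sum_comm]
      refine Finset.sum_congr rfl fun v _ => ?_
      rw [Finset.sum_filter]
      refine Finset.sum_congr rfl fun τ _ => ?_
      simp only [io]
      split_ifs <;> simp_all
    have r : ∑ τ, s τ * ∑ v ∈ τ, sgn F v τ * h (τ.erase v) τ =
        ∑ v, ∑ τ ∈ Finset.univ.filter (fun τ : Finset W => v ∈ τ),
          s τ * (sgn F v τ * h (τ.erase v) τ) := by
      simp only [Finset.sum_filter]
      rw [Finset.sum_comm]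
      refine Finset.sum_congr rfl fun τ _ => ?_
      rw [Finset.mul_sum, ← Finset.sum_filter]
      refine Finset.sum_congr (by ext; simp) fun v _ => rfl
    rw [l, r, ← Finset.sum_neg_distrib]
    refine Finset.sum_congr rfl fun v _ => ?_
    rw [← Finset.sum_neg_distrib]
    refine Finset.sum_bij' (fun τ _ => insert v τ) (fun τ _ => τ.erase v) ?_ ?_ ?_ ?_ ?_
    · intro τ _; simp
    · intro τ _; simp
    · intro τ hτ
      exact Finset.erase_insert (by simpa using hτ)
    · intro τ hτ
      exact Finset.insert_erase (by simpa using hτ)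
    · intro τ hτ
      have hv : v ∉ τ := by simpa using hτ
      rw [Finset.erase_insert hv, ← sgn_erase_self v (insert v τ), Finset.erase_insert hv]
      simp only [s, Finset.card_insert_of_notMem hv, pow_succ]
      ring
  rw [hflip] at hsum
  have : (1 : F) = 0 := by linear_combination -hsum
  exact one_ne_zero this

/-- Extension by zero of chains to functions on all finsets. -/
noncomputable def extZ (K : Set (Finset W)) (n : ℕ) : SChain F K n →ₗ[F] (Finset W → F) := by
  classical
  exact
  { toFun := fun c ρ => if h : ρ ∈ K ∧ ρ.card = n then (show Face K n →₀ F from c) ⟨ρ, h⟩ else 0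
    map_add' := by
      intro a b
      funext ρ
      simp only [Pi.add_apply]
      split_ifs with h
      · exact Finsupp.add_apply (show Face K n →₀ F from a) (show Face K n →₀ F from b) _
      · simp
    map_smul' := by
      intro r a
      funext ρ
      simp only [Pi.smul_apply, RingHom.id_apply]
      split_ifs with h
      · exact Finsupp.smul_apply r (show Face K n →₀ F from a) _
      · simp }

lemma extZ_apply_face (K : Set (Finset W)) (n : ℕ) (c : SChain F K n) (σ : Face K n) :
    extZ K n c σ.1 = (show Face K n →₀ F from c) σ := by
  simp only [extZ, LinearMap.coe_mk, AddHom.coe_mk]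
  rw [dif_pos σ.2]
  rfl

lemma extZ_apply_not (K : Set (Finset W)) (n : ℕ) (c : SChain F K n) (ρ : Finset W)
    (h : ¬ (ρ ∈ K ∧ ρ.card = n)) : extZ K n c ρ = 0 := by
  simp only [extZ, LinearMap.coe_mk, AddHom.coe_mk]
  rw [dif_neg h]

lemma extZ_single (K : Set (Finset W)) (n : ℕ) (σ : Face K n) (r : F) :
    extZ K n (Finsupp.single σ r : Face K n →₀ F) = Pi.single σ.1 r := by
  classical
  funext ρ
  by_cases h : ρ ∈ K ∧ ρ.card = n
  · refine (extZ_apply_face K n _ (⟨ρ, h⟩ : Face K n)).trans ?_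
    by_cases e : σ = (⟨ρ, h⟩ : Face K n)
    · rw [e]
      exact (Finsupp.single_eq_same).trans (Pi.single_eq_same (M := fun _ => F) ρ r).symm
    · refine (Finsupp.single_eq_of_ne (Ne.symm e)).trans ?_
      symm
      rw [Pi.single_apply, if_neg]
      exact fun e' => e (Subtype.ext e'.symm)
  · refine (extZ_apply_not K n _ ρ h).trans ?_
    symm
    rw [Pi.single_apply, if_neg]
    rintro rfl
    exact h σ.2

lemma extZ_inj (K : Set (Finset W)) (n : ℕ) : Function.Injective (extZ (F := F) K n) := by
  intro a b hab
  refine Finsupp.ext (f := (show Face K n →₀ F from a)) (g := (show Face K n →₀ F from b)) ?_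
  intro σ
  have := congrFun hab σ.1
  rwa [extZ_apply_face, extZ_apply_face] at this

lemma sgn_eq (v : W) (σ : Finset W) :
    sgn F v σ = (-1 : F) ^ ((σ.filter (fun y => y < v)).card) := by
  unfold sgn
  rw [Finset.prod_ite]
  simp

lemma extZ_bdry (K : Set (Finset W)) (hK : IsComplex K) (n : ℕ) (c : SChain F K (n + 1)) :
    extZ K n (sbdry F K n c) = bd (extZ K (n + 1) c) := by
  classical
  have key : (extZ K n).comp (sbdry F K n) = (bdL (W := W) (F := F)).comp (extZ K (n + 1)) := by
    refine Finsupp.lhom_ext' fun σ => LinearMap.ext_ring ?_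
    change extZ K n (sbdry F K n (Finsupp.single σ 1 : Face K (n+1) →₀ F))
      = bd (extZ K (n + 1) (Finsupp.single σ 1 : Face K (n+1) →₀ F))
    rw [extZ_single]
    have e : sbdry F K n (Finsupp.single σ 1 : Face K (n+1) →₀ F) = bdryElem F K n σ := by
      unfold sbdry
      refine (Finsupp.lsum_single _ _ _ _).trans ?_
      simp [LinearMap.toSpanSingleton_apply]
    rw [e, bdryElem, map_sum]
    funext ρ
    rw [Finset.sum_apply]
    have t : ∀ x ∈ σ.1.attach, (extZ K n (if h : σ.1.erase ↑x ∈ K then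
      ((-1 : F) ^ ((σ.1.filter (fun y => y < (x : W))).card)) •
        (Finsupp.single (⟨σ.1.erase ↑x, h, by
          rw [Finset.card_erase_of_mem x.2, σ.2.2]; rfl⟩ : Face K n) 1 : SChain F K n)
      else 0)) ρ = (fun x : W => sgn F x σ.1 * (if ρ = σ.1.erase x then 1 else 0)) x := by
      intro x _
      have hh : σ.1.erase ↑x ∈ K := hK _ σ.2.1 _ (Finset.erase_subset _ _)
      refine (congrArg (fun c => extZ K n c ρ) (dif_pos hh)).trans ?_
      refine (congrFun ((extZ K n).map_smul _ _) ρ).trans ?_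
      refine (congrArg (fun q => ((-1 : F) ^ ((σ.1.filter (fun y => y < (x : W))).card)) * q)
        (congrFun (extZ_single K n _ 1) ρ)).trans ?_
      simp only [Pi.single_apply, sgn_eq]
    rw [Finset.sum_congr rfl t, Finset.sum_attach σ.1
      (fun x : W => sgn F x σ.1 * (if ρ = σ.1.erase x then 1 else 0))]
    simp only [bd]
    rw [← Finset.sum_subset (Finset.subset_univ σ.1)]
    · refine Finset.sum_congr rfl fun v hv => ?_
      simp only [io, Pi.single_apply]
      by_cases hρ : ρ = σ.1.erase v
      · subst hρ
        simp [Finset.insert_erase hv, sgn_erase_self]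
      · rw [if_neg hρ]
        split_ifs with h1 h2
        · simp
        · exfalso
          apply hρ
          rw [← h2, Finset.erase_insert h1]
        · simp
    · intro v _ hv
      simp only [io, Pi.single_apply]
      split_ifs with h1 h2
      · rfl
      · exfalso; apply hv; rw [← h2]; simp
      · simp
  exact LinearMap.congr_fun key c

lemma exists_extZ (K : Set (Finset W)) (n : ℕ) (z : Finset W → F)
    (hz : ∀ ρ, z ρ ≠ 0 → ρ ∈ K ∧ ρ.card = n) : ∃ c : SChain F K n, extZ K n c = z := by
  classical
  have : Finite (Face K n) := Subtype.finite
  refine ⟨(Finsupp.equivFunOnFinite.symm (fun σ : Face K n => z σ.1) : Face K n →₀ F), ?_⟩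
  funext ρ
  by_cases h : ρ ∈ K ∧ ρ.card = n
  · exact extZ_apply_face K n _ (⟨ρ, h⟩ : Face K n)
  · refine (extZ_apply_not _ _ _ _ h).trans ?_
    by_contra h'
    exact h (hz ρ (Ne.symm h'))

lemma fill_of_RH (K : Set (Finset W)) (hK : IsComplex K) (i : ℕ)
    (hs : Subsingleton (RH F K (i + 1))) (z : Finset W → F)
    (hz : ∀ ρ, z ρ ≠ 0 → ρ ∈ K ∧ ρ.card = i + 1) (hbz : bd z = 0) :
    ∃ w : Finset W → F, (∀ ρ, w ρ ≠ 0 → ρ ∈ K ∧ ρ.card = i + 2) ∧ bd w = z := by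
  obtain ⟨c, rfl⟩ := exists_extZ K (i + 1) z hz
  have hc : c ∈ scyc F K (i + 1) := by
    change c ∈ LinearMap.ker (sbdry F K i)
    rw [LinearMap.mem_ker]
    apply extZ_inj
    rw [extZ_bdry K hK, hbz, map_zero]
  rw [Submodule.Quotient.subsingleton_iff] at hs
  have : (⟨c, hc⟩ : scyc F K (i + 1)) ∈
      Submodule.comap (scyc F K (i + 1)).subtype (LinearMap.range (sbdry F K (i + 1))) := by
    rw [hs]; trivial
  obtain ⟨w, hw⟩ := this
  refine ⟨extZ K (i + 2) w, ?_, ?_⟩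
  · intro ρ hρ
    by_contra h
    exact hρ (extZ_apply_not _ _ _ _ h)
  · rw [← extZ_bdry K hK, hw]
    rfl

lemma RH_subsingleton_of_large (K : Set (Finset W)) (i : ℕ) (hi : Fintype.card W ≤ i) :
    Subsingleton (RH F K (i + 1)) := by
  have : IsEmpty (Face K (i + 1)) := ⟨fun σ => by
    have := Finset.card_le_univ σ.1
    have h2 := σ.2.2
    omega⟩
  have : Subsingleton (SChain F K (i + 1)) :=
    inferInstanceAs (Subsingleton (Face K (i + 1) →₀ F))
  rw [Submodule.Quotient.subsingleton_iff, Submodule.eq_top_iff']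
  intro x
  have : x = 0 := Subsingleton.elim _ _
  rw [this]
  exact Submodule.zero_mem _

end Ops

end RTH

/-- **A Relative Topological Colorful Helly Theorem** (Kalai–Meshulam, main theorem).
Let `X, Y` be complexes on the same finite vertex set `V` and let `M` be a matroid with
`Y^∨ ⊆ M ⊆ X` (as complexes).  Then there is a simplex `σ ∈ X` with
`ρ_M(V \ σ) ≤ L_Y(X; F)`. -/
theorem relative_topological_colorful_helly
    {V : Type} [Fintype V] [LinearOrder V] (F : Type) [Field F]
    (X Y : Set (Finset V)) (hX : IsComplex X) (hY : IsComplex Y)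
    (M : Matroid V) (hME : M.E = Set.univ)
    (hYM : alexDual Y ⊆ indepComplex M) (hMX : indepComplex M ⊆ X) :
    ∃ σ ∈ X, matroidRank M ((↑σ : Set V)ᶜ) ≤ relLeray F X Y := by
  classical
  by_contra hcon
  push Not at hcon
  obtain ⟨d, hd⟩ : ∃ d, d = relLeray F X Y := ⟨_, rfl⟩
  have hmem : ∀ σ ∈ Y, ∀ i : ℕ, d ≤ i → Subsingleton (RH F (induce X σᶜ) (i + 1)) := by
    have : relLeray F X Y ∈
        {d | ∀ σ ∈ Y, ∀ i : ℕ, d ≤ i → Subsingleton (RH F (induce X σᶜ) (i + 1))} :=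
      Nat.sInf_mem ⟨Fintype.card V, fun σ _ i hi => RTH.RH_subsingleton_of_large _ i hi⟩
    rw [← hd] at this
    exact this
  have hrank : ∀ σ ∈ X, ∃ I : Finset V, I ⊆ σᶜ ∧ M.Indep (I : Set V) ∧ d < I.card := by
    intro σ hσ
    have h1 := hcon σ hσ
    rw [← hd] at h1
    unfold matroidRank at h1
    obtain ⟨n, ⟨I, hI1, hI2, rfl⟩, hn⟩ := exists_lt_of_lt_csSup (by
      refine ⟨0, ∅, ?_, ?_, rfl⟩ <;> simp) h1
    refine ⟨I, ?_, hI2, hn⟩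
    rw [← Finset.coe_subset, Finset.coe_compl]
    exact hI1
  have hXind : ∀ S : Finset V, IsComplex (induce X S) :=
    fun S σ hσ τ hτ => ⟨hX σ hσ.1 τ hτ, hτ.trans hσ.2⟩
  -- filling in high degrees
  have hhigh : ∀ (α : Finset V) (i : ℕ), d ≤ i → ∀ z : Finset V → F,
      (∀ ρ, z ρ ≠ 0 → ρ ∈ induce X αᶜ ∧ ρ.card = i + 1) → RTH.bd z = 0 →
      ∃ w : Finset V → F, (∀ ρ, w ρ ≠ 0 → ρ ∈ induce X αᶜ ∧ ρ.card = i + 2) ∧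
        RTH.bd w = z := by
    intro α i hi z hz hbz
    by_cases hα : α ∈ Y
    · exact RTH.fill_of_RH _ (hXind _) i (hmem α hα i hi) z hz hbz
    · have hαX : αᶜ ∈ X := hMX (hYM (by
        change αᶜᶜ ∉ Y
        rwa [compl_compl]))
      by_cases hz0 : z = 0
      · exact ⟨0, fun ρ hρ => absurd rfl hρ, by
          rw [hz0]; exact map_zero (RTH.bdL (W := V) (F := F))⟩
      obtain ⟨ρ₀, hρ₀⟩ := Function.ne_iff.1 hz0
      obtain ⟨h1, h2⟩ := hz ρ₀ hρ₀
      obtain ⟨e, he⟩ : ρ₀.Nonempty := Finset.card_pos.1 (by omega)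
      have heα : e ∈ αᶜ := h1.2 he
      refine ⟨RTH.we e z, ?_, RTH.bd_we_of_cycle e z hbz⟩
      intro ρ hρ
      have heρ : e ∈ ρ := by
        by_contra h
        exact hρ (by simp [RTH.we, h])
      have h0 : z (ρ.erase e) ≠ 0 := fun h => hρ (by simp [RTH.we, h])
      obtain ⟨h3, h4⟩ := hz _ h0
      have hρα : ρ ⊆ αᶜ := by
        intro x hx
        by_cases hxe : x = e
        · exact hxe ▸ heα
        · exact h3.2 (Finset.mem_erase.2 ⟨hxe, hx⟩)
      have hc := Finset.card_erase_add_one heρ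
      exact ⟨⟨hX _ hαX _ hρα, hρα⟩, by omega⟩
  let P : Finset V → ℕ → Set (Finset V) := fun α n =>
    {ρ | ρ ∈ X ∧ ρ ⊆ αᶜ ∧ ρ.card = n ∧ (n ≤ d + 1 → M.Indep (ρ : Set V))}
  have hXe : ∅ ∈ X := hMX (by change M.Indep _; simp)
  refine RTH.cube_contra (F := F) X hX hXe (fun α n => RTH.supp F (P α n)) ?_ ?_ ?_ ?_
  · intro α n c hc ρ hρ
    have := hc ρ hρ
    exact ⟨this.1, Finset.disjoint_left.2 fun x hx hxρ =>
      Finset.mem_compl.1 (this.2.1 hxρ) hx⟩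
  · intro α β n hαβ c hc ρ hρ
    have := hc ρ hρ
    exact ⟨this.1, this.2.1.trans (Finset.compl_subset_compl.2 hαβ), this.2.2⟩
  · intro α ρ hρ
    have : ρ = ∅ := by
      by_contra h
      exact hρ (by simp [h])
    subst this
    exact ⟨hXe, by simp, rfl, fun _ => by simp⟩
  · intro α hα n z hz hbz
    by_cases hn : n ≤ d
    · obtain ⟨I, hI1, hI2, hI3⟩ := hrank α hα
      obtain ⟨w, hw, hbw⟩ := RTH.matroid_fill (F := F) (fun A : Finset V => M.Indep (A : Set V))
        (fun A B hAB hB => hB.subset (by exact_mod_cast hAB))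
        (by
          intro A B hA hB hAB
          obtain ⟨x, hx, hx'⟩ := hA.augment hB (by
            rw [Set.encard_coe_eq_coe_finsetCard, Set.encard_coe_eq_coe_finsetCard]
            exact_mod_cast hAB)
          refine ⟨x, by simpa using hx.1, by simpa using hx.2, ?_⟩
          rw [Finset.coe_insert]
          exact hx')
        _ αᶜ rfl ∅ n (by simp) ⟨I, hI1, by simpa using hI2, by omega⟩ z
        (by
          intro ρ hρ
          have := hz ρ hρ
          exact ⟨this.2.1, by simpa using this.2.2.2 (by omega), this.2.2.1⟩) hbz
      refine ⟨w, ?_, hbw⟩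
      intro ρ hρ
      obtain ⟨h1, h2, h3⟩ := hw ρ hρ
      rw [Finset.union_empty] at h2
      exact ⟨hMX h2, h1, h3, fun _ => h2⟩
    · obtain ⟨i, rfl⟩ : ∃ i, n = i + 1 := ⟨n - 1, by omega⟩
      obtain ⟨w, hw, hbw⟩ := hhigh α i (by omega) z (fun ρ hρ => by
        have := hz ρ hρ
        exact ⟨⟨this.1, this.2.1⟩, this.2.2.1⟩) hbz
      refine ⟨w, ?_, hbw⟩
      intro ρ hρ
      obtain ⟨h1, h2⟩ := hw ρ hρ
      exact ⟨h1.1, h1.2, h2, fun h => by omega⟩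
end

section
/- Let X be a simplicial complex on a finite vertex set V, let A ⊆ V, and let d ≥ 0. For integers k_1 ≥ 0 and k_2 ≥ 1, the pair (X,A) satisfies property P_d(k_1,k_2) if and only if it satisfies property P_d(k_1+1, k_2−1). -/
open Finset

variable {V : Type*}

/-- Property `P_d(k₁,k₂)` for a pair `(X, A)`:
`h̃_i(lk(X[V \ σ₁], σ₂); F) = 0` for all `i ≥ d` and all disjoint `σ₁, σ₂ ⊆ A` with
`|σ₁| ≤ k₁` and `|σ₂| ≤ k₂`. -/
def PropertyP {V : Type} [Fintype V] [LinearOrder V] (F : Type) [Field F]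
    (X : Set (Finset V)) (A : Finset V) (d k₁ k₂ : ℕ) : Prop :=
  ∀ σ₁ σ₂ : Finset V, σ₁ ⊆ A → σ₂ ⊆ A → Disjoint σ₁ σ₂ →
    σ₁.card ≤ k₁ → σ₂.card ≤ k₂ →
    ∀ i : ℕ, d ≤ i → Subsingleton (RH F (link (induce X σ₁ᶜ) σ₂) (i + 1))

section Aux

set_option linter.unusedSectionVars false

variable {W : Type} [Fintype W] [LinearOrder W] {F : Type} [Field F]

/-- Sign of `x` relative to `τ`. -/
def sgn (F : Type) [Field F] (τ : Finset W) (x : W) : F :=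
  (-1 : F) ^ ((τ.filter (fun y => y < x)).card)

/-- Ambient boundary on functions. -/
def amb (c : Finset W → F) : Finset W → F := fun τ =>
  ∑ x ∈ τᶜ, sgn F τ x * c (insert x τ)

/-- A function supported on faces of `X` of cardinality `n`. -/
def Supp (X : Set (Finset W)) (n : ℕ) (z : Finset W → F) : Prop :=
  ∀ σ, z σ ≠ 0 → σ ∈ X ∧ σ.card = n

open Classical in
/-- Extension by zero. -/
noncomputable def ext0 (X : Set (Finset W)) (n : ℕ) : SChain F X n →ₗ[F] (Finset W → F) where
  toFun c := fun σ => if h : σ ∈ X ∧ σ.card = n then DFunLike.coe (F := Face X n →₀ F) c ⟨σ, h⟩ else 0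
  map_add' a b := by
    funext σ
    by_cases h : σ ∈ X ∧ σ.card = n
    · simp only [dif_pos h, Pi.add_apply]; rfl
    · simp [dif_neg h]
  map_smul' a b := by
    funext σ
    by_cases h : σ ∈ X ∧ σ.card = n
    · simp only [dif_pos h, Pi.smul_apply]; rfl
    · simp [dif_neg h]

lemma ext0_inj (X : Set (Finset W)) (n : ℕ) :
    Function.Injective (ext0 (F := F) X n) := by
  intro a b h
  refine Finsupp.ext (fun σ => ?_)
  have := congrFun h σ.1
  simp only [ext0, LinearMap.coe_mk, AddHom.coe_mk, dif_pos σ.2] at this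
  exact this

lemma ext0_supp (X : Set (Finset W)) (n : ℕ) (c : SChain F X n) :
    Supp X n (ext0 X n c) := by
  intro σ h
  by_contra h'
  exact h (by simp [ext0, dif_neg h'])

lemma ext0_surj (X : Set (Finset W)) (n : ℕ) (z : Finset W → F) (hz : Supp X n z) :
    ∃ c : SChain F X n, ext0 X n c = z := by
  have : Finite (Face X n) := by unfold Face; infer_instance
  refine ⟨(Finsupp.equivFunOnFinite.symm (fun σ : Face X n => z σ.1) : Face X n →₀ F), ?_⟩
  funext σ
  simp only [ext0, LinearMap.coe_mk, AddHom.coe_mk]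
  split_ifs with h
  · rfl
  · by_contra h'
    exact h (hz σ (Ne.symm h'))

lemma ext0_single (X : Set (Finset W)) (n : ℕ) (σ : Face X n) (a : F) :
    ext0 X n (Finsupp.single σ a : Face X n →₀ F) = Pi.single σ.1 a := by
  funext τ
  simp only [ext0, LinearMap.coe_mk, AddHom.coe_mk]
  by_cases hτ : τ = σ.1
  · subst hτ
    rw [dif_pos σ.2, Pi.single_eq_same]
    exact Finsupp.single_eq_same
  · rw [Pi.single_eq_of_ne hτ]
    split_ifs with h
    · refine Finsupp.single_eq_of_ne (M := F) ?_
      intro h'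
      exact hτ (congrArg Subtype.val h')
    · rfl

lemma amb_add (a b : Finset W → F) : amb (a + b) = amb a + amb b := by
  funext τ
  simp [amb, mul_add, Finset.sum_add_distrib]

lemma amb_neg (a : Finset W → F) : amb (-a) = - amb a := by
  funext τ
  simp [amb]

lemma amb_zero : amb (0 : Finset W → F) = 0 := by
  funext τ
  simp [amb]

lemma amb_smul (r : F) (a : Finset W → F) : amb (r • a) = r • amb a := by
  funext τ
  simp [amb, Finset.mul_sum, mul_left_comm]

lemma amb_single (σ : Finset W) :
    amb (Pi.single σ (1 : F)) =
      ∑ x ∈ σ, sgn F σ x • (Pi.single (σ.erase x) (1 : F) : Finset W → F) := by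
  funext τ
  simp only [amb, Finset.sum_apply, Pi.smul_apply, smul_eq_mul, Pi.single_apply, mul_ite,
    mul_one, mul_zero]
  rw [← Finset.sum_filter, ← Finset.sum_filter]
  refine Finset.sum_congr ?_ ?_
  · ext x
    simp only [Finset.mem_filter, Finset.mem_compl]
    constructor
    · rintro ⟨h, rfl⟩
      simp [h]
    · rintro ⟨h, rfl⟩
      simp [h]
  · intro x hx
    simp only [Finset.mem_filter] at hx
    obtain ⟨h, rfl⟩ := hx
    unfold sgn
    congr 2
    ext y
    simp only [Finset.mem_filter, Finset.mem_erase]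
    constructor
    · rintro ⟨⟨_, h⟩, h2⟩
      exact ⟨h, h2⟩
    · rintro ⟨h, h2⟩
      exact ⟨⟨h2.ne, h⟩, h2⟩

/-- Basis chain. -/
noncomputable def sgl (X : Set (Finset W)) (n : ℕ) (σ : Face X n) (r : F) : SChain F X n :=
  (Finsupp.single σ r : Face X n →₀ F)

lemma schain_ind (X : Set (Finset W)) (n : ℕ) (p : SChain F X n → Prop) (h0 : p 0)
    (hadd : ∀ a b, p a → p b → p (a + b)) (hs : ∀ σ r, p (sgl X n σ r)) (c : SChain F X n) :
    p c :=
  Finsupp.induction_linear (motive := p) c h0 hadd hs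

lemma sbdry_sgl (X : Set (Finset W)) (n : ℕ) (σ : Face X (n+1)) (r : F) :
    sbdry F X n (sgl X (n+1) σ r) = r • bdryElem F X n σ := by
  have := Finsupp.lsum_single (R := F) F (fun σ => LinearMap.toSpanSingleton F (SChain F X n) (bdryElem F X n σ)) σ r
  exact this

lemma ext0_bdryElem (X : Set (Finset W)) (hX : IsComplex X) (n : ℕ) (σ : Face X (n+1)) :
    ext0 X n (bdryElem F X n σ) =
      ∑ x ∈ σ.1, sgn F σ.1 x • (Pi.single (σ.1.erase x) (1 : F) : Finset W → F) := by
  refine (map_sum (ext0 (F := F) X n) _ _).trans ?_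
  rw [← Finset.sum_attach σ.1]
  refine Finset.sum_congr rfl (fun x _ => ?_)
  have hx := hX _ σ.2.1 _ (Finset.erase_subset x.1 σ.1)
  refine (congrArg (ext0 (F := F) X n) (dif_pos hx)).trans ?_
  refine (map_smul (ext0 (F := F) X n) _ _).trans ?_
  exact congrArg (sgn F σ.1 x.1 • ·) (ext0_single (F := F) X n _ 1)

lemma ext0_bdry (X : Set (Finset W)) (hX : IsComplex X) (n : ℕ) (c : SChain F X (n+1)) :
    ext0 X n (sbdry F X n c) = amb (ext0 X (n+1) c) := by
  induction c using schain_ind with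
  | h0 => rw [map_zero, map_zero, map_zero, amb_zero]
  | hadd a b ha hb => rw [map_add, map_add, map_add, amb_add, ha, hb]
  | hs σ r =>
    have h3 : (Pi.single σ.1 r : Finset W → F) = r • Pi.single σ.1 (1 : F) := by
      rw [← Pi.single_smul]; simp
    rw [sbdry_sgl, map_smul, sgl, ext0_single, h3, amb_smul, amb_single, ext0_bdryElem X hX]

lemma RH_iff (X : Set (Finset W)) (hX : IsComplex X) (n : ℕ) :
    Subsingleton (RH F X (n+1)) ↔ ∀ z : Finset W → F, Supp X (n+1) z → amb z = 0 →
      ∃ b, Supp X (n+2) b ∧ amb b = z := by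
  rw [Submodule.Quotient.subsingleton_iff, Submodule.comap_subtype_eq_top]
  constructor
  · intro h z hz hz0
    obtain ⟨c, rfl⟩ := ext0_surj X (n+1) z hz
    have hc : c ∈ scyc F X (n+1) := by
      change sbdry F X n c = 0
      apply ext0_inj
      rw [ext0_bdry X hX, hz0, map_zero]
    obtain ⟨b, hb⟩ := h hc
    exact ⟨ext0 X (n+2) b, ext0_supp _ _ _, by rw [← ext0_bdry X hX, hb]⟩
  · intro h c hc
    have hc : sbdry F X n c = 0 := hc
    obtain ⟨b, hb, hb'⟩ := h (ext0 X (n+1) c) (ext0_supp _ _ _)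
      (by rw [← ext0_bdry X hX, hc, map_zero])
    obtain ⟨b, rfl⟩ := ext0_surj X (n+2) b hb
    refine ⟨b, ext0_inj X (n+1) ?_⟩
    rw [ext0_bdry X hX, hb']

/-- Part away from `v`. -/
def p0 (v : W) (c : Finset W → F) : Finset W → F := fun τ => if v ∈ τ then 0 else c τ

/-- Coefficient of `v`. -/
def p1 (v : W) (c : Finset W → F) : Finset W → F := fun τ =>
  if v ∈ τ then 0 else sgn F τ v * c (insert v τ)

lemma sgn_mul_self (τ : Finset W) (x : W) : sgn F τ x * sgn F τ x = 1 := by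
  unfold sgn
  rw [← mul_pow]; simp

lemma sgn_insert (τ : Finset W) (x y : W) (hx : x ∉ τ) :
    sgn F (insert x τ) y = (if x < y then -1 else 1) * sgn F τ y := by
  unfold sgn
  rw [Finset.filter_insert]
  split_ifs with h
  · rw [Finset.card_insert_of_notMem (by simp [hx]), pow_succ]; ring
  · simp

lemma p0_amb (v : W) (c : Finset W → F) : p0 v (amb c) = amb (p0 v c) + p1 v c := by
  funext τ
  simp only [Pi.add_apply, amb]
  by_cases h : v ∈ τ
  · simp [h, p0, p1]
  · simp only [h, if_false, p0, p1, amb]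
    rw [← Finset.add_sum_erase (τᶜ) _ (Finset.mem_compl.2 h),
      ← Finset.add_sum_erase (τᶜ) (fun x => sgn F τ x * if v ∈ insert x τ then 0 else c (insert x τ))
        (Finset.mem_compl.2 h)]
    simp only [Finset.mem_insert_self, if_true, mul_zero, zero_add]
    rw [add_comm]
    congr 1
    refine Finset.sum_congr rfl (fun x hx => ?_)
    have hx' := (Finset.mem_erase.1 hx).1
    rw [if_neg]
    simp [h, Ne.symm hx']

lemma p1_amb (v : W) (c : Finset W → F) : p1 v (amb c) = - amb (p1 v c) := by
  funext τ
  simp only [Pi.neg_apply, amb]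
  by_cases h : v ∈ τ
  · simp [h, p1]
  · simp only [h, if_false, p1, amb]
    rw [← Finset.add_sum_erase (τᶜ) (fun x => sgn F τ x * if v ∈ insert x τ then 0 else
        sgn F (insert x τ) v * c (insert v (insert x τ)))
        (Finset.mem_compl.2 h)]
    simp only [Finset.mem_insert_self, if_true, mul_zero, zero_add]
    rw [Finset.mul_sum, ← Finset.sum_neg_distrib]
    refine Finset.sum_congr ?_ (fun x hx => ?_)
    · ext x; simp
    · simp only [Finset.mem_compl, Finset.mem_erase] at hx
      rw [if_neg (by simp [h, Ne.symm hx.1]), sgn_insert τ v x h, sgn_insert τ x v hx.2,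
        Finset.insert_comm]
      rcases lt_or_gt_of_ne hx.1 with h' | h'
      · simp [h', h'.not_gt]; ring
      · simp [h', h'.not_gt]; ring

lemma supp_p0 {Y K : Set (Finset W)} {v : W} (hK : ∀ σ, σ ∈ K ↔ σ ∈ Y ∧ v ∉ σ) {n : ℕ}
    {c : Finset W → F} (hc : Supp Y n c) : Supp K n (p0 v c) := by
  intro σ h
  unfold p0 at h
  split_ifs at h with hv
  · exact absurd rfl h
  · exact ⟨(hK σ).2 ⟨(hc σ h).1, hv⟩, (hc σ h).2⟩

lemma supp_p1 {Y L : Set (Finset W)} {v : W} (hL : ∀ σ, σ ∈ L ↔ insert v σ ∈ Y ∧ v ∉ σ) {n : ℕ}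
    {c : Finset W → F} (hc : Supp Y (n+1) c) : Supp L n (p1 v c) := by
  intro σ h
  unfold p1 at h
  split_ifs at h with hv
  · exact absurd rfl h
  · have := hc _ (right_ne_zero_of_mul h)
    refine ⟨(hL σ).2 ⟨this.1, hv⟩, ?_⟩
    have h2 := this.2
    rw [Finset.card_insert_of_notMem hv] at h2
    omega

lemma supp_add {Y : Set (Finset W)} {n : ℕ} {a b : Finset W → F}
    (ha : Supp Y n a) (hb : Supp Y n b) : Supp Y n (a + b) := by
  intro σ h
  by_cases h1 : a σ = 0
  · exact hb σ (by simpa [h1] using h)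
  · exact ha σ h1

lemma supp_mono {Y K : Set (Finset W)} (hYK : Y ⊆ K) {n : ℕ} {a : Finset W → F}
    (ha : Supp Y n a) : Supp K n a := fun σ h => ⟨hYK (ha σ h).1, (ha σ h).2⟩

lemma p0_of_supp {Y : Set (Finset W)} {v : W} (hY : ∀ σ ∈ Y, v ∉ σ) {n : ℕ}
    {z : Finset W → F} (hz : Supp Y n z) : p0 v z = z := by
  funext σ
  unfold p0
  split_ifs with h
  · by_contra h'
    exact hY σ (hz σ (Ne.symm h')).1 h
  · rfl

lemma p1_of_supp {Y : Set (Finset W)} {v : W} (hY : ∀ σ ∈ Y, v ∉ σ) {n : ℕ}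
    {z : Finset W → F} (hz : Supp Y n z) : p1 v z = 0 := by
  funext σ
  unfold p1
  split_ifs with h
  · rfl
  · by_contra h'
    exact hY _ (hz _ (right_ne_zero_of_mul h')).1 (by simp)

lemma L_sub_K {Y K L : Set (Finset W)} {v : W} (hY : IsComplex Y)
    (hK : ∀ σ, σ ∈ K ↔ σ ∈ Y ∧ v ∉ σ) (hL : ∀ σ, σ ∈ L ↔ insert v σ ∈ Y ∧ v ∉ σ) : L ⊆ K :=
  fun σ h => (hK σ).2 ⟨hY _ ((hL σ).1 h).1 _ (Finset.subset_insert _ _), ((hL σ).1 h).2⟩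

lemma del_of {Y K L : Set (Finset W)} {v : W} (hY : IsComplex Y) (hKc : IsComplex K)
    (hLc : IsComplex L)
    (hK : ∀ σ, σ ∈ K ↔ σ ∈ Y ∧ v ∉ σ) (hL : ∀ σ, σ ∈ L ↔ insert v σ ∈ Y ∧ v ∉ σ) (n : ℕ)
    (h1 : Subsingleton (RH F Y (n+1))) (h2 : Subsingleton (RH F L (n+1))) :
    Subsingleton (RH F K (n+1)) := by
  rw [RH_iff _ hY] at h1
  rw [RH_iff _ hLc] at h2
  rw [RH_iff _ hKc]
  intro z hz hz0
  obtain ⟨w, hw, hwz⟩ := h1 z (supp_mono (fun σ h => ((hK σ).1 h).1) hz) hz0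
  have e0 := p0_amb v w
  have e1 := p1_amb v w
  rw [hwz, p0_of_supp (fun σ h => ((hK σ).1 h).2) hz] at e0
  rw [hwz, p1_of_supp (fun σ h => ((hK σ).1 h).2) hz] at e1
  obtain ⟨t, ht, htw⟩ := h2 (p1 v w) (supp_p1 hL hw) (neg_eq_zero.1 e1.symm)
  exact ⟨p0 v w + t, supp_add (supp_p0 hK hw) (supp_mono (L_sub_K hY hK hL) ht),
    by rw [amb_add, htw, e0]⟩

lemma ext_of_p {v : W} {c : Finset W → F} (h0 : p0 v c = 0) (h1 : p1 v c = 0) : c = 0 := by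
  funext σ
  by_cases h : v ∈ σ
  · have := congrFun h1 (σ.erase v)
    simp only [p1, Finset.notMem_erase, if_false, Finset.insert_erase h, Pi.zero_apply] at this
    rcases mul_eq_zero.1 this with h2 | h2
    · exact absurd (sgn_mul_self (F := F) (σ.erase v) v) (by simp [h2])
    · exact h2
  · have := congrFun h0 σ
    simpa [p0, h] using this

lemma lk_of {Y K L : Set (Finset W)} {v : W} (hY : IsComplex Y) (hKc : IsComplex K)
    (hLc : IsComplex L)
    (hK : ∀ σ, σ ∈ K ↔ σ ∈ Y ∧ v ∉ σ) (hL : ∀ σ, σ ∈ L ↔ insert v σ ∈ Y ∧ v ∉ σ) (n : ℕ)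
    (h1 : Subsingleton (RH F Y (n+2))) (h2 : Subsingleton (RH F K (n+1))) :
    Subsingleton (RH F L (n+1)) := by
  rw [RH_iff _ hY] at h1
  rw [RH_iff _ hKc] at h2
  rw [RH_iff _ hLc]
  intro u hu hu0
  obtain ⟨b, hb, hbu⟩ := h2 u (supp_mono (L_sub_K hY hK hL) hu) hu0
  let c : Finset W → F := fun τ => if v ∈ τ then - (sgn F (τ.erase v) v * u (τ.erase v)) else b τ
  have hc0 : p0 v c = b := by
    rw [← p0_of_supp (fun σ h => ((hK σ).1 h).2) hb]
    funext τ
    by_cases h : v ∈ τ <;> simp [p0, c, h]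
  have hc1 : p1 v c = - u := by
    rw [← p0_of_supp (fun σ h => ((hL σ).1 h).2) hu]
    funext τ
    by_cases h : v ∈ τ
    · simp [p0, p1, h]
    · simp [p0, p1, c, h, ← mul_assoc, sgn_mul_self]
  have hc : Supp Y (n+2) c := by
    intro σ h
    by_cases hv : v ∈ σ
    · simp only [c, hv, if_true] at h
      have := hu _ (right_ne_zero_of_mul (neg_ne_zero.1 h))
      have h3 := ((hL _).1 this.1).1
      rw [Finset.insert_erase hv] at h3
      refine ⟨h3, ?_⟩
      have h4 := Finset.card_erase_add_one hv
      omega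
    · simp only [c, hv, if_false] at h
      exact ⟨((hK _).1 (hb _ h).1).1, (hb _ h).2⟩
  have hc' : amb c = 0 := by
    apply ext_of_p (v := v)
    · rw [p0_amb, hc0, hc1, hbu]; simp
    · rw [p1_amb, hc1, amb_neg, hu0]; simp
  obtain ⟨e, he, hec⟩ := h1 c hc hc'
  refine ⟨p1 v e, supp_p1 hL he, ?_⟩
  have := p1_amb v e
  rw [hec, hc1] at this
  exact (neg_injective this).symm

lemma lk_complex {X : Set (Finset W)} (hX : IsComplex X) (S τ : Finset W) :
    IsComplex (link (induce X S) τ) := by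
  rintro σ ⟨⟨h1, h2⟩, h3⟩ ρ hρ
  have := Finset.union_subset_union_left (t := τ) hρ
  exact ⟨⟨hX _ h1 _ this, this.trans h2⟩, h3.mono_left hρ⟩

lemma mem_del (X : Set (Finset W)) (s t : Finset W) (v : W) (hvt : v ∉ t) (σ : Finset W) :
    σ ∈ link (induce X (insert v s)ᶜ) t ↔ σ ∈ link (induce X sᶜ) t ∧ v ∉ σ := by
  simp only [link, induce, Set.mem_ofPred_eq, Finset.subset_compl_comm (s := σ ∪ t),
    Finset.insert_subset_iff, Finset.mem_compl, Finset.mem_union]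
  tauto

lemma mem_lk (X : Set (Finset W)) (s t : Finset W) (v : W) (hvt : v ∉ t) (σ : Finset W) :
    σ ∈ link (induce X s) (insert v t) ↔ insert v σ ∈ link (induce X s) t ∧ v ∉ σ := by
  simp only [link, Set.mem_ofPred_eq, Finset.disjoint_insert_right, Finset.disjoint_insert_left,
    Finset.union_insert, Finset.insert_union]
  tauto

end Aux

/-- **Proposition 2.3**: for a fixed pair `(X, A)` and `k₁ ≥ 0`, `k₂ ≥ 1`, the properties
`P_d(k₁,k₂)` and `P_d(k₁+1,k₂-1)` are equivalent. -/
theorem propertyP_shift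
    {V : Type} [Fintype V] [LinearOrder V] (F : Type) [Field F]
    (X : Set (Finset V)) (hX : IsComplex X) (A : Finset V)
    (d k₁ k₂ : ℕ) (hk₂ : 1 ≤ k₂) :
    PropertyP F X A d k₁ k₂ ↔ PropertyP F X A d (k₁ + 1) (k₂ - 1) := by
  constructor
  · intro h s t hs ht hst cs ct i hi
    by_cases hc : s.card ≤ k₁
    · exact h s t hs ht hst hc (by omega) i hi
    obtain ⟨v, hv⟩ : s.Nonempty := Finset.card_pos.1 (by omega)
    obtain ⟨s, hvs, rfl⟩ : ∃ s', v ∉ s' ∧ insert v s' = s :=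
      ⟨s.erase v, Finset.notMem_erase _ _, Finset.insert_erase hv⟩
    rw [Finset.card_insert_of_notMem hvs] at cs
    rw [Finset.insert_subset_iff] at hs
    rw [Finset.disjoint_insert_left] at hst
    refine del_of (lk_complex hX sᶜ t) (lk_complex hX _ _) (lk_complex hX sᶜ (insert v t))
      (mem_del X s t v hst.1) (mem_lk X sᶜ t v hst.1) i ?_ ?_
    · exact h s t hs.2 ht hst.2 (by omega) (by omega) i hi
    · refine h s (insert v t) hs.2 (Finset.insert_subset hs.1 ht) ?_ (by omega) ?_ i hi
      · exact Finset.disjoint_insert_right.2 ⟨hvs, hst.2⟩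
      · rw [Finset.card_insert_of_notMem hst.1]; omega
  · intro h s t hs ht hst cs ct i hi
    by_cases hc : t.card ≤ k₂ - 1
    · exact h s t hs ht hst (by omega) hc i hi
    obtain ⟨v, hv⟩ : t.Nonempty := Finset.card_pos.1 (by omega)
    obtain ⟨t, hvt, rfl⟩ : ∃ t', v ∉ t' ∧ insert v t' = t :=
      ⟨t.erase v, Finset.notMem_erase _ _, Finset.insert_erase hv⟩
    rw [Finset.card_insert_of_notMem hvt] at ct
    rw [Finset.insert_subset_iff] at ht
    rw [Finset.disjoint_insert_right] at hst
    refine lk_of (lk_complex hX sᶜ t) (lk_complex hX (insert v s)ᶜ t) (lk_complex hX _ _)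
      (mem_del X s t v hvt) (mem_lk X sᶜ t v hvt) i ?_ ?_
    · exact h s t hs ht.2 hst.2 (by omega) (by omega) (i+1) (by omega)
    · refine h (insert v s) t (Finset.insert_subset ht.1 hs) ht.2 ?_ ?_ (by omega) i hi
      · exact Finset.disjoint_insert_left.2 ⟨hvt, hst.2⟩
      · rw [Finset.card_insert_of_notMem hst.1]; omega
end
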